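/- arXiv:0911.0618 — 2 statements merged into one kernel-verified Lean document; each statement's English description precedes it below -/
import Mathlib

section
/- Sewing map associated with the heat semigroup (L^p version): let T > 0, μ > 1 and κ ∈ [0, μ]. Let h : S_T³ → L^p(ℝ^n) be continuous and satisfy (i) S_{t−v} h_{vus} − h_{tus} + h_{tvs} − h_{tvu} = 0 for all 0 ≤ s ≤ u ≤ v ≤ t ≤ T, and (ii) ‖h_{tus}‖_{L^p} ≤ C (t−u)^κ (u−s)^{μ−κ} for all (s,u,t) ∈ S_T³ and some constant C. Then there exists a unique continuous map Λh : S_T² → L^p(ℝ^n) such that sup_{0≤s<t≤T} ‖(Λh)_{ts}‖_{L^p}/(t−s)^μ < ∞ and δ̂(Λh) = h, i.e. (Λh)_{ts} − (Λh)_{tu} − S_{t−u}((Λh)_{us}) = h_{tus} for all 0 ≤ s ≤ u ≤ t ≤ T. Moreover the contraction bound sup_{s<t} ‖(Λh)_{ts}‖_{L^p}/(t−s)^μ ≤ c C holds for a constant c depending only on μ and T. -/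
open MeasureTheory Real
open scoped ENNReal

/-- The heat kernel on ℝ^n: `g_t(ξ) = (2πt)^(-n/2) exp(-|ξ|²/(2t))`. -/
noncomputable def heatKernel (n : ℕ) (t : ℝ) : EuclideanSpace ℝ (Fin n) → ℝ :=
  fun ξ => (2 * π * t) ^ (-(n : ℝ) / 2) * Real.exp (-‖ξ‖ ^ 2 / (2 * t))

/-- Convolution of two real functions on ℝ^n. -/
noncomputable def convol {n : ℕ} (f g : EuclideanSpace ℝ (Fin n) → ℝ) :
    EuclideanSpace ℝ (Fin n) → ℝ :=
  fun ξ => ∫ η, f η * g (ξ - η)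

/-- The Lebesgue space `L^p(ℝ^n)`. -/
abbrev LpR (n : ℕ) (p : ℝ) : Type :=
  Lp ℝ (ENNReal.ofReal p) (volume : Measure (EuclideanSpace ℝ (Fin n)))

/-! Since `h` is closed, `B t s = -h t s 0` satisfies `δ̂B = h`, so it suffices to correct `B` by a
cocycle `I`, with `δ̂I = 0`, such that `B t s - I t s` is of order `(t - s) ^ μ`. This `I` is the
limit of twisted Riemann sums of `B`. Such a sum over any partition of `[s, t]` is within a constant
times `(t - s) ^ μ` of `B t s`: remove the partition interval straddling the midpoint, at the cost
of two values of `δ̂B`, and treat the two remaining parts, each of length at most `(t - s) / 2`, in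
the same way; the resulting series converges because `2 * (1 / 2) ^ μ < 1`. The same inequality
forces a cocycle of order `μ` to vanish, which is uniqueness.

Only the evolution law, uniform boundedness and strong continuity of `S (t - s)` enter. For the heat
semigroup they hold because it is convolution with the Gaussian laws of Brownian motion, that is, an
average of translations, and translations are strongly continuous isometries of `L^p`. -/

section Sewing

open Filter Finset
open scoped Topology

variable {E : Type*} [NormedAddCommGroup E] {μ : ℝ}

theorem two_rpow_one_sub_lt_one (hμ : 1 < μ) : (2 : ℝ) ^ (1 - μ) < 1 :=
  Real.rpow_lt_one_of_one_lt_of_neg one_lt_two (sub_neg.2 hμ)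

theorem two_mul_half_rpow {x : ℝ} (hx : 0 ≤ x) (μ : ℝ) :
    2 * (x / 2) ^ μ = 2 ^ (1 - μ) * x ^ μ := by
  rw [Real.div_rpow hx two_pos.le, Real.rpow_sub two_pos, Real.rpow_one]
  ring

theorem two_pow_mul_half_pow_rpow (μ : ℝ) (N : ℕ) :
    2 ^ N * ((1 / 2 : ℝ) ^ N) ^ μ = ((2 : ℝ) ^ (1 - μ)) ^ N := by
  rw [← Real.rpow_natCast_mul (by positivity), mul_comm (N : ℝ) μ,
    Real.rpow_mul_natCast (by positivity), ← mul_pow]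
  congr 1
  simpa using two_mul_half_rpow zero_le_one μ

theorem rpow_mul_rpow_sub_le {a b κ : ℝ} (ha : 0 ≤ a) (hb : 0 ≤ b) (hκ : 0 ≤ κ) (hκμ : κ ≤ μ) :
    a ^ κ * b ^ (μ - κ) ≤ (a + b) ^ μ := by
  have hsub : 0 ≤ μ - κ := sub_nonneg.2 hκμ
  calc a ^ κ * b ^ (μ - κ) ≤ (a + b) ^ κ * (a + b) ^ (μ - κ) := by gcongr <;> linarith
    _ = (a + b) ^ μ := by
        rw [← Real.rpow_add_of_nonneg (add_nonneg ha hb) hκ hsub, add_sub_cancel]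

theorem nonneg_of_norm_le_rpow_mul_rpow {h : ℝ → ℝ → ℝ → E} {T C κ : ℝ} (hT : 0 < T)
    (hh : ∀ s u t, 0 ≤ s → s ≤ u → u ≤ t → t ≤ T →
      ‖h t u s‖ ≤ C * (t - u) ^ κ * (u - s) ^ (μ - κ)) : 0 ≤ C := by
  have hhalf : 0 < (T / 2) ^ κ * (T / 2) ^ (μ - κ) := by positivity
  have h := (norm_nonneg _).trans (hh 0 (T / 2) T le_rfl (by linarith) (by linarith) le_rfl)
  rw [sub_half, sub_zero, mul_assoc] at h
  exact nonneg_of_mul_nonneg_left h hhalf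

theorem sum_range_two_mul {G : Type*} [AddCommMonoid G] (f : ℕ → G) (n : ℕ) :
    ∑ i ∈ range (2 * n), f i = ∑ i ∈ range n, (f (2 * i) + f (2 * i + 1)) := by
  induction n with
  | zero => simp
  | succ n ih => rw [Nat.mul_succ, sum_range_succ, sum_range_succ, ih, sum_range_succ, add_assoc]

theorem norm_sum_le_of_norm_le_half_pow_rpow {f : ℕ → E} {n N : ℕ} {D : ℝ}
    (hf : ∀ i < n * 2 ^ N, ‖f i‖ ≤ D * ((1 / 2 : ℝ) ^ N) ^ μ) :
    ‖∑ i ∈ range (n * 2 ^ N), f i‖ ≤ n * D * ((2 : ℝ) ^ (1 - μ)) ^ N := by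
  refine (norm_sum_le_of_le _ fun i hi => hf i (mem_range.1 hi)).trans_eq ?_
  rw [sum_const, card_range, nsmul_eq_mul, ← two_pow_mul_half_pow_rpow]
  push_cast
  ring

theorem tendsto_const_mul_two_rpow_pow (hμ : 1 < μ) (D : ℝ) :
    Tendsto (fun N : ℕ => D * ((2 : ℝ) ^ (1 - μ)) ^ N) atTop (𝓝 0) := by
  simpa using (tendsto_pow_atTop_nhds_zero_of_lt_one (by positivity)
    (two_rpow_one_sub_lt_one hμ)).const_mul D

theorem exists_tendstoUniformlyOn_of_norm_sub_le_geometric [CompleteSpace E] {α : Type*}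
    {A : Set α} {F : ℕ → α → E} {K r : ℝ} (hr0 : 0 ≤ r) (hr1 : r < 1)
    (hF : ∀ N, ∀ a ∈ A, ‖F (N + 1) a - F N a‖ ≤ K * r ^ N) :
    ∃ f, TendstoUniformlyOn F f atTop A := by
  refine ⟨fun a => F 0 a + ∑' N, (F (N + 1) a - F N a), Metric.tendstoUniformlyOn_iff.2
    fun ε hε => ?_⟩
  filter_upwards [Metric.tendstoUniformlyOn_iff.1 (tendstoUniformlyOn_tsum_nat
    ((summable_geometric_of_lt_one hr0 hr1).mul_left K) hF) ε hε] with N hN a ha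
  simpa [dist_eq_norm, sum_range_sub (F · a), add_sub_right_comm, sub_sub_eq_add_sub, add_comm]
    using hN a ha

/-- The simplex `S_T² = {(t, s) | 0 ≤ s ≤ t ≤ T}`, with the later time first as in `L t s`. -/
def simplex₂ (T : ℝ) : Set (ℝ × ℝ) :=
  {q | 0 ≤ q.2 ∧ q.2 ≤ q.1 ∧ q.1 ≤ T}

/-- The simplex `S_T³ = {(t, u, s) | 0 ≤ s ≤ u ≤ t ≤ T}`, with the later time first as in
`h t u s`. -/
def simplex₃ (T : ℝ) : Set (ℝ × ℝ × ℝ) :=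
  {q | 0 ≤ q.2.2 ∧ q.2.2 ≤ q.2.1 ∧ q.2.1 ≤ q.1 ∧ q.1 ≤ T}

variable [NormedSpace ℝ E]

/-- A strongly continuous evolution family on `[0, T]` bounded by `M`. A strongly continuous
semigroup `S` bounded by `M` on `[0, T]` is the case `U t s = S (t - s)`. -/
structure IsEvolutionFamily (U : ℝ → ℝ → E →L[ℝ] E) (T M : ℝ) : Prop where
  apply_self : ∀ t, 0 ≤ t → t ≤ T → ∀ x, U t t x = x
  apply_apply : ∀ s u t, 0 ≤ s → s ≤ u → u ≤ t → t ≤ T → ∀ x, U t u (U u s x) = U t s x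
  norm_le : ∀ s t, 0 ≤ s → s ≤ t → t ≤ T → ‖U t s‖ ≤ M
  continuousOn_apply : ∀ x, ContinuousOn (fun q : ℝ × ℝ => U q.1 q.2 x) (simplex₂ T)

/-- The twisted coboundary `δ̂L`, of which the sewing map is an inverse. -/
def twistedCoboundary (U : ℝ → ℝ → E →L[ℝ] E) (L : ℝ → ℝ → E) (t u s : ℝ) : E :=
  L t s - L t u - U t u (L u s)

/-- Almost additivity of order `μ`: the twisted coboundary of `B` on `[s, t]` is of size
`(t - s) ^ μ`. -/
def IsAlmostAdditive (U : ℝ → ℝ → E →L[ℝ] E) (B : ℝ → ℝ → E) (T C μ : ℝ) : Prop :=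
  ∀ s u t, 0 ≤ s → s ≤ u → u ≤ t → t ≤ T → ‖twistedCoboundary U B t u s‖ ≤ C * (t - s) ^ μ

/-- The Riemann sum of `B` over the points `τ m, …, τ n`, transported to the time `t` by `U`. -/
def twistedSum (U : ℝ → ℝ → E →L[ℝ] E) (B : ℝ → ℝ → E) (τ : ℕ → ℝ) (t : ℝ) (m n : ℕ) : E :=
  ∑ i ∈ Ico m n, U t (τ (i + 1)) (B (τ (i + 1)) (τ i))

/-- The constant of the sewing estimate: it solves `K = 2 + 2 ^ (1 - μ) * K`, where `2` counts the
triangles lost at a bisection and `2 ^ (1 - μ) * K` comes from the two halves. -/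
noncomputable def sewingConst (μ : ℝ) : ℝ :=
  2 / (1 - 2 ^ (1 - μ))

/-- The dyadic grid of mesh `2 ^ (-N)`, clamped to `[s, t]`. -/
noncomputable def dyadicClamp (s t : ℝ) (N i : ℕ) : ℝ :=
  max s (min t (i / 2 ^ N))

/-- The twisted Riemann sum of `B` over the dyadic grid of mesh `2 ^ (-N)` in `[s, t]`. Running over
the whole grid of `[0, n]`, with `n ≥ t`, makes the index set independent of `s` and `t`; the
intervals outside `[s, t]` collapse to a point. -/
noncomputable def dyadicSum (U : ℝ → ℝ → E →L[ℝ] E) (B : ℝ → ℝ → E) (n N : ℕ) (t s : ℝ) : E :=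
  twistedSum U B (dyadicClamp s t N) t 0 (n * 2 ^ N)

variable {U : ℝ → ℝ → E →L[ℝ] E} {B L : ℝ → ℝ → E} {T M C : ℝ}

theorem sewingConst_pos (hμ : 1 < μ) : 0 < sewingConst μ :=
  div_pos two_pos (sub_pos.2 (two_rpow_one_sub_lt_one hμ))

theorem two_add_two_rpow_mul_sewingConst (hμ : 1 < μ) :
    2 + 2 ^ (1 - μ) * sewingConst μ = sewingConst μ := by
  have h : 1 - (2 : ℝ) ^ (1 - μ) ≠ 0 := (sub_pos.2 (two_rpow_one_sub_lt_one hμ)).ne'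
  rw [sewingConst]
  field_simp
  ring

theorem twistedCoboundary_sub (L₁ L₂ : ℝ → ℝ → E) (t u s : ℝ) :
    twistedCoboundary U (L₁ - L₂) t u s =
      twistedCoboundary U L₁ t u s - twistedCoboundary U L₂ t u s := by
  simp only [twistedCoboundary, Pi.sub_apply, map_sub]
  abel

theorem exists_le_and_le_succ {τ : ℕ → ℝ} {c : ℝ} {m n : ℕ} (hmn : m < n) (hm : τ m ≤ c)
    (hn : c ≤ τ n) : ∃ j, m ≤ j ∧ j < n ∧ τ j ≤ c ∧ c ≤ τ (j + 1) := by
  induction n, hmn using Nat.le_induction with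
  | base => exact ⟨m, le_rfl, m.lt_succ_self, hm, hn⟩
  | succ n hmn ih =>
    obtain hc | hc := le_total (τ n) c
    · exact ⟨n, by omega, n.lt_succ_self, hc, hn⟩
    · obtain ⟨j, hmj, hjn, hj⟩ := ih hc
      exact ⟨j, hmj, hjn.trans n.lt_succ_self, hj⟩

section DyadicClamp

variable {s u t : ℝ} {N n i : ℕ}

theorem le_dyadicClamp : s ≤ dyadicClamp s t N i :=
  le_max_left _ _

theorem dyadicClamp_le (hst : s ≤ t) : dyadicClamp s t N i ≤ t :=
  max_le hst (min_le_left _ _)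

theorem monotone_dyadicClamp : Monotone (dyadicClamp s t N) := fun i j hij => by
  unfold dyadicClamp
  gcongr

theorem dyadicClamp_zero_right (hs : 0 ≤ s) : dyadicClamp s t N 0 = s := by
  simp [dyadicClamp, hs]

theorem dyadicClamp_eq_right (hst : s ≤ t) (ht : t ≤ n) :
    dyadicClamp s t N (n * 2 ^ N) = t := by
  simp [dyadicClamp, ht, hst]

theorem dyadicClamp_succ_two_mul : dyadicClamp s t (N + 1) (2 * i) = dyadicClamp s t N i := by
  unfold dyadicClamp
  congr 2
  rw [pow_succ', Nat.cast_mul, Nat.cast_two, mul_div_mul_left _ _ two_ne_zero]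

theorem dyadicClamp_succ_sub_le :
    dyadicClamp s t N (i + 1) - dyadicClamp s t N i ≤ (1 / 2) ^ N := by
  have hgrid : ((i + 1 : ℕ) : ℝ) / 2 ^ N = i / 2 ^ N + (1 / 2) ^ N := by
    rw [Nat.cast_succ, add_div, one_div_pow]
  have hmesh : (0 : ℝ) < (1 / 2) ^ N := by positivity
  rw [dyadicClamp, dyadicClamp, hgrid]
  grind

theorem dyadicClamp_eq_max (hsu : s ≤ u) :
    dyadicClamp u t N i = max u (dyadicClamp s t N i) := by
  rw [dyadicClamp, dyadicClamp, ← max_assoc, max_eq_left hsu]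

theorem dyadicClamp_eq_min (hsu : s ≤ u) (hut : u ≤ t) :
    dyadicClamp s u N i = min u (dyadicClamp s t N i) := by
  rw [dyadicClamp, dyadicClamp, min_max_distrib_left, min_eq_right hsu, ← min_assoc,
    min_eq_left hut]

end DyadicClamp

theorem dyadicSum_eq_sum (U : ℝ → ℝ → E →L[ℝ] E) (B : ℝ → ℝ → E) (n N : ℕ) (t s : ℝ) :
    dyadicSum U B n N t s = ∑ i ∈ range (n * 2 ^ N),
      U t (dyadicClamp s t N (i + 1)) (B (dyadicClamp s t N (i + 1)) (dyadicClamp s t N i)) := by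
  rw [dyadicSum, twistedSum, range_eq_Ico]

theorem IsAlmostAdditive.apply_self (hU : IsEvolutionFamily U T M) (hB : IsAlmostAdditive U B T C μ)
    (hμ : 1 < μ) {s : ℝ} (hs : 0 ≤ s) (hsT : s ≤ T) : B s s = 0 := by
  have h := hB s s s hs le_rfl le_rfl hsT
  simpa [twistedCoboundary, hU.apply_self s hs hsT, Real.zero_rpow (zero_lt_one.trans hμ).ne']
    using h

namespace IsEvolutionFamily

theorem bound_nonneg (hU : IsEvolutionFamily U T M) {t : ℝ} (ht : 0 ≤ t) (htT : t ≤ T) : 0 ≤ M :=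
  (norm_nonneg _).trans (hU.norm_le t t ht le_rfl htT)

theorem continuousOn_uncurry (hU : IsEvolutionFamily U T M) :
    ContinuousOn (fun q : (ℝ × ℝ) × E => U q.1.1 q.1.2 q.2) (simplex₂ T ×ˢ Set.univ) :=
  continuousOn_prod_of_continuousOn_lipschitzOnWith' _ M.toNNReal
    (fun q hq => ((U q.1 q.2).lipschitz.weaken
      (NNReal.le_toNNReal_of_coe_le (hU.norm_le _ _ hq.1 hq.2.1 hq.2.2))).lipschitzOnWith)
    fun x _ => hU.continuousOn_apply x

theorem norm_map_twistedCoboundary_le (hU : IsEvolutionFamily U T M)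
    (hB : IsAlmostAdditive U B T C μ) {s u v t : ℝ} (hs : 0 ≤ s) (hsu : s ≤ u) (huv : u ≤ v)
    (hvt : v ≤ t) (ht : t ≤ T) :
    ‖U t v (B v s) - U t v (B v u) - U t u (B u s)‖ ≤ M * C * (v - s) ^ μ := by
  have hmap : U t v (B v s) - U t v (B v u) - U t u (B u s)
      = U t v (twistedCoboundary U B v u s) := by
    rw [twistedCoboundary, map_sub, map_sub,
      hU.apply_apply u v t (hs.trans hsu) huv hvt ht]
  have hM := hU.norm_le v t (by linarith) hvt ht
  rw [hmap, mul_assoc]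
  exact (U t v).le_of_opNorm_le_of_le hM (hB s u v hs hsu huv (hvt.trans ht))

theorem norm_map_sub_twistedSum_le_add (hU : IsEvolutionFamily U T M)
    (hB : IsAlmostAdditive U B T C μ) (hμ : 0 ≤ μ) (hC : 0 ≤ C) {τ : ℕ → ℝ} (hτ : Monotone τ)
    {t : ℝ} {m j n : ℕ} (hmj : m ≤ j) (hjn : j < n) (hm : 0 ≤ τ m) (hn : τ n ≤ t) (ht : t ≤ T) :
    ‖U t (τ n) (B (τ n) (τ m)) - twistedSum U B τ t m n‖ ≤
      2 * (M * C * (τ n - τ m) ^ μ) + ‖U t (τ j) (B (τ j) (τ m)) - twistedSum U B τ t m j‖ +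
        ‖U t (τ n) (B (τ n) (τ (j + 1))) - twistedSum U B τ t (j + 1) n‖ := by
  have hτmj := hτ hmj
  have hτj := hτ j.le_succ
  have hτjn := hτ (Nat.succ_le_of_lt hjn)
  have hM : 0 ≤ M := hU.bound_nonneg (by linarith) ht
  have houter := hU.norm_map_twistedCoboundary_le hB hm hτmj (hτj.trans hτjn) hn ht
  have hinner := (hU.norm_map_twistedCoboundary_le hB (hm.trans hτmj) hτj hτjn hn ht).trans
    (show _ ≤ M * C * (τ n - τ m) ^ μ by gcongr; linarith)
  have hsplit : twistedSum U B τ t m n = twistedSum U B τ t m j +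
      U t (τ (j + 1)) (B (τ (j + 1)) (τ j)) + twistedSum U B τ t (j + 1) n := by
    simp only [twistedSum]
    rw [← sum_Ico_succ_top hmj, sum_Ico_consecutive _ (by omega) (by omega)]
  rw [hsplit]
  refine (norm_add₄_le.trans (add_le_add_left (add_le_add_left (add_le_add houter hinner) _) _))
    |>.trans_eq' (congrArg norm ?_) |>.trans_eq (by rw [two_mul])
  abel

theorem norm_map_sub_twistedSum_le (hU : IsEvolutionFamily U T M)
    (hB : IsAlmostAdditive U B T C μ) (hμ : 1 < μ) (hC : 0 ≤ C) {τ : ℕ → ℝ} (hτ : Monotone τ)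
    {t : ℝ} {m n : ℕ} (hmn : m ≤ n) (hm : 0 ≤ τ m) (hn : τ n ≤ t) (ht : t ≤ T) :
    ‖U t (τ n) (B (τ n) (τ m)) - twistedSum U B τ t m n‖ ≤
      M * sewingConst μ * C * (τ n - τ m) ^ μ := by
  have hK := (sewingConst_pos hμ).le
  have hτmn := hτ hmn
  have hM : 0 ≤ M := hU.bound_nonneg (by linarith) ht
  induction hd : n - m using Nat.strong_induction_on generalizing m n with
  | _ d ih =>
  obtain rfl | hlt := hmn.eq_or_lt
  · rw [hB.apply_self hU hμ hm (hn.trans ht)]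
    simp [twistedSum, Real.zero_rpow (zero_lt_one.trans hμ).ne']
  obtain ⟨j, hmj, hjn, hj, hj'⟩ := exists_le_and_le_succ (τ := τ) (c := (τ m + τ n) / 2) hlt
    (by linarith) (by linarith)
  have hτmj := hτ hmj
  have hτjn := hτ (Nat.succ_le_of_lt hjn)
  have hleft : ‖U t (τ j) (B (τ j) (τ m)) - twistedSum U B τ t m j‖ ≤
      M * sewingConst μ * C * ((τ n - τ m) / 2) ^ μ :=
    (ih _ (by omega) hmj hm (by linarith) hτmj rfl).trans (by gcongr; linarith)
  have hright : ‖U t (τ n) (B (τ n) (τ (j + 1))) - twistedSum U B τ t (j + 1) n‖ ≤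
      M * sewingConst μ * C * ((τ n - τ m) / 2) ^ μ :=
    (ih _ (by omega) hjn (by linarith) hn hτjn rfl).trans (by gcongr; linarith)
  calc _ ≤ 2 * (M * C * (τ n - τ m) ^ μ) + M * sewingConst μ * C * ((τ n - τ m) / 2) ^ μ +
        M * sewingConst μ * C * ((τ n - τ m) / 2) ^ μ :=
        (hU.norm_map_sub_twistedSum_le_add hB (zero_le_one.trans hμ.le) hC hτ hmj hjn hm hn
          ht).trans (by gcongr)
    _ = M * C * (2 * (τ n - τ m) ^ μ + sewingConst μ * (2 * ((τ n - τ m) / 2) ^ μ)) := by ring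
    _ = M * (2 + 2 ^ (1 - μ) * sewingConst μ) * C * (τ n - τ m) ^ μ := by
        rw [two_mul_half_rpow (sub_nonneg.2 hτmn)]; ring
    _ = M * sewingConst μ * C * (τ n - τ m) ^ μ := by
        rw [two_add_two_rpow_mul_sewingConst hμ]

theorem continuousOn_dyadicSum (hU : IsEvolutionFamily U T M)
    (hB : ContinuousOn (fun q : ℝ × ℝ => B q.1 q.2) (simplex₂ T)) (n N : ℕ) :
    ContinuousOn (fun q : ℝ × ℝ => dyadicSum U B n N q.1 q.2) (simplex₂ T) := by
  have hcont (i : ℕ) : Continuous fun q : ℝ × ℝ => dyadicClamp q.2 q.1 N i := by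
    unfold dyadicClamp
    fun_prop
  simp only [dyadicSum_eq_sum]
  refine continuousOn_finsetSum _ fun i _ => hU.continuousOn_uncurry.comp
    (f := fun q : ℝ × ℝ => ((q.1, dyadicClamp q.2 q.1 N (i + 1)),
      B (dyadicClamp q.2 q.1 N (i + 1)) (dyadicClamp q.2 q.1 N i)))
    (.prodMk (continuous_fst.prodMk (hcont _)).continuousOn
      (hB.comp ((hcont _).prodMk (hcont _)).continuousOn ?_)) ?_
  · exact fun q hq => ⟨hq.1.trans le_dyadicClamp, monotone_dyadicClamp i.le_succ,
      (dyadicClamp_le hq.2.1).trans hq.2.2⟩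
  · exact fun q hq => ⟨⟨hq.1.trans le_dyadicClamp, dyadicClamp_le hq.2.1, hq.2.2⟩, trivial⟩

theorem norm_dyadicSum_succ_sub_le (hU : IsEvolutionFamily U T M)
    (hB : IsAlmostAdditive U B T C μ) (hμ : 0 ≤ μ) (hC : 0 ≤ C) (n N : ℕ) {s t : ℝ}
    (hs : 0 ≤ s) (hst : s ≤ t) (ht : t ≤ T) :
    ‖dyadicSum U B n (N + 1) t s - dyadicSum U B n N t s‖ ≤
      n * (M * C) * ((2 : ℝ) ^ (1 - μ)) ^ N := by
  have hM := hU.bound_nonneg (hs.trans hst) ht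
  rw [norm_sub_rev, dyadicSum_eq_sum, dyadicSum_eq_sum, pow_succ', mul_left_comm,
    sum_range_two_mul, ← sum_sub_distrib]
  refine norm_sum_le_of_norm_le_half_pow_rpow fun i _ => ?_
  let τ : ℕ → ℝ := dyadicClamp s t (N + 1)
  have hτ_mono : Monotone τ := monotone_dyadicClamp
  have hcoarse (k : ℕ) : dyadicClamp s t N k = τ (2 * k) := dyadicClamp_succ_two_mul.symm
  have hmesh : τ (2 * i + 2) - τ (2 * i) ≤ (1 / 2) ^ N := by
    rw [← Nat.mul_succ, ← hcoarse, ← hcoarse]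
    exact dyadicClamp_succ_sub_le
  have hlen := sub_nonneg.2 (hτ_mono (Nat.le_add_right (2 * i) 2))
  rw [hcoarse, hcoarse, Nat.mul_succ, add_comm (U t (dyadicClamp s t (N + 1) _) _), ← sub_sub]
  refine (hU.norm_map_twistedCoboundary_le hB (hs.trans le_dyadicClamp)
    (hτ_mono (2 * i).le_succ) (hτ_mono (2 * i + 1).le_succ) (dyadicClamp_le hst) ht).trans ?_
  gcongr

theorem norm_twistedCoboundary_clamp_le (hU : IsEvolutionFamily U T M)
    (hB : IsAlmostAdditive U B T C μ) (hμ : 1 < μ) (hC : 0 ≤ C) {a b u t : ℝ}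
    (ha : 0 ≤ a) (hab : a ≤ b) (hu : 0 ≤ u) (hut : u ≤ t) (hbt : b ≤ t) (ht : t ≤ T) :
    ‖U t b (B b a) - U t (max u b) (B (max u b) (max u a))
      - U t u (U u (min u b) (B (min u b) (min u a)))‖ ≤ M * C * (b - a) ^ μ := by
  have hM := hU.bound_nonneg (hu.trans hut) ht
  have hbound : 0 ≤ M * C * (b - a) ^ μ :=
    mul_nonneg (mul_nonneg hM hC) (Real.rpow_nonneg (sub_nonneg.2 hab) μ)
  have hBu := hB.apply_self hU hμ hu (hut.trans ht)
  obtain hbu | hub := le_total b u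
  · rw [max_eq_left hbu, max_eq_left (hab.trans hbu), min_eq_right hbu,
      min_eq_right (hab.trans hbu), hU.apply_apply b u t (ha.trans hab) hbu hut ht, hBu]
    simpa using hbound
  rw [max_eq_right hub, min_eq_left hub, hU.apply_self u hu (hut.trans ht)]
  obtain hau | hua := le_total a u
  · rw [max_eq_left hau, min_eq_right hau]
    exact hU.norm_map_twistedCoboundary_le hB ha hau hub hbt ht
  · rw [max_eq_right hua, min_eq_left hua, hBu]
    simpa using hbound

theorem norm_twistedCoboundary_dyadicSum_le (hU : IsEvolutionFamily U T M)
    (hB : IsAlmostAdditive U B T C μ) (hμ : 1 < μ) (hC : 0 ≤ C) (n N : ℕ) {s u t : ℝ}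
    (hs : 0 ≤ s) (hsu : s ≤ u) (hut : u ≤ t) (ht : t ≤ T) :
    ‖twistedCoboundary U (dyadicSum U B n N) t u s‖ ≤
      n * (M * C) * ((2 : ℝ) ^ (1 - μ)) ^ N := by
  have hM := hU.bound_nonneg (by linarith) ht
  rw [twistedCoboundary, dyadicSum_eq_sum, dyadicSum_eq_sum, dyadicSum_eq_sum, map_sum,
    ← sum_sub_distrib, ← sum_sub_distrib]
  refine norm_sum_le_of_norm_le_half_pow_rpow fun i _ => ?_
  simp only [dyadicClamp_eq_max (t := t) hsu, dyadicClamp_eq_min hsu hut]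
  have hτ_mono : dyadicClamp s t N i ≤ dyadicClamp s t N (i + 1) := monotone_dyadicClamp i.le_succ
  refine (hU.norm_twistedCoboundary_clamp_le hB hμ hC (hs.trans le_dyadicClamp) hτ_mono
    (hs.trans hsu) hut (dyadicClamp_le (hsu.trans hut)) ht).trans ?_
  gcongr
  exact dyadicClamp_succ_sub_le

theorem norm_sub_dyadicSum_le (hU : IsEvolutionFamily U T M)
    (hB : IsAlmostAdditive U B T C μ) (hμ : 1 < μ) (hC : 0 ≤ C) {n : ℕ} (hn : T ≤ n) (N : ℕ)
    {s t : ℝ} (hs : 0 ≤ s) (hst : s ≤ t) (ht : t ≤ T) :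
    ‖B t s - dyadicSum U B n N t s‖ ≤ M * sewingConst μ * C * (t - s) ^ μ := by
  have hzero : dyadicClamp s t N 0 = s := dyadicClamp_zero_right hs
  have hend : dyadicClamp s t N (n * 2 ^ N) = t := dyadicClamp_eq_right hst (ht.trans hn)
  have h := hU.norm_map_sub_twistedSum_le hB hμ hC (τ := dyadicClamp s t N) monotone_dyadicClamp
    (Nat.zero_le (n * 2 ^ N)) (hzero.symm ▸ hs) hend.le ht
  rwa [hzero, hend, hU.apply_self t (hs.trans hst) ht] at h

theorem exists_twistedCoboundary_eq_zero [CompleteSpace E] (hU : IsEvolutionFamily U T M)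
    (hB : IsAlmostAdditive U B T C μ)
    (hBc : ContinuousOn (fun q : ℝ × ℝ => B q.1 q.2) (simplex₂ T)) (hμ : 1 < μ) (hC : 0 ≤ C) :
    ∃ I : ℝ → ℝ → E,
      ContinuousOn (fun q : ℝ × ℝ => I q.1 q.2) (simplex₂ T) ∧
      (∀ s u t, 0 ≤ s → s ≤ u → u ≤ t → t ≤ T → twistedCoboundary U I t u s = 0) ∧
      ∀ s t, 0 ≤ s → s ≤ t → t ≤ T →
        ‖B t s - I t s‖ ≤ M * sewingConst μ * C * (t - s) ^ μ := by
  let n := ⌈T⌉₊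
  obtain ⟨I, hI⟩ := exists_tendstoUniformlyOn_of_norm_sub_le_geometric (A := simplex₂ T)
    (F := fun N q => dyadicSum U B n N q.1 q.2) (by positivity) (two_rpow_one_sub_lt_one hμ)
    fun N q hq => hU.norm_dyadicSum_succ_sub_le hB (zero_le_one.trans hμ.le) hC n N
      hq.1 hq.2.1 hq.2.2
  have hlim {s t : ℝ} (hs : 0 ≤ s) (hst : s ≤ t) (ht : t ≤ T) :
      Tendsto (fun N => dyadicSum U B n N t s) atTop (𝓝 (I (t, s))) :=
    hI.tendsto_at (x := (t, s)) ⟨hs, hst, ht⟩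
  refine ⟨fun t s => I (t, s), hI.continuousOn (.of_forall (hU.continuousOn_dyadicSum hBc n)),
    fun s u t hs hsu hut ht => ?_, fun s t hs hst ht => ?_⟩
  · refine tendsto_nhds_unique (((hlim hs (hsu.trans hut) ht).sub
      (hlim (hs.trans hsu) hut ht)).sub ((U t u).continuous.tendsto _ |>.comp
      (hlim hs hsu (hut.trans ht)))) (squeeze_zero_norm (fun N => ?_)
      (tendsto_const_mul_two_rpow_pow hμ (n * (M * C))))
    exact hU.norm_twistedCoboundary_dyadicSum_le hB hμ hC n N hs hsu hut ht
  · exact le_of_tendsto (tendsto_const_nhds.sub (hlim hs hst ht)).norm (.of_forall fun N =>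
      hU.norm_sub_dyadicSum_le hB hμ hC (Nat.le_ceil T) N hs hst ht)

theorem eq_zero_of_twistedCoboundary_eq_zero (hU : IsEvolutionFamily U T M)
    {D : ℝ → ℝ → E} (hμ : 1 < μ)
    (hD : ∀ s u t, 0 ≤ s → s ≤ u → u ≤ t → t ≤ T → twistedCoboundary U D t u s = 0)
    {K : ℝ} (hK : ∀ s t, 0 ≤ s → s ≤ t → t ≤ T → ‖D t s‖ ≤ K * (t - s) ^ μ)
    {s t : ℝ} (hs : 0 ≤ s) (hst : s ≤ t) (ht : t ≤ T) : D t s = 0 := by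
  have hadd : IsAlmostAdditive U D T 0 μ := fun s u t hs hsu hut ht => by
    simp [hD s u t hs hsu hut ht]
  have hsum (N : ℕ) : D t s = dyadicSum U D ⌈T⌉₊ N t s := by
    have h := hU.norm_sub_dyadicSum_le hadd hμ le_rfl (Nat.le_ceil T) N hs hst ht
    rwa [mul_zero, zero_mul, norm_le_zero_iff, sub_eq_zero] at h
  refine tendsto_nhds_unique tendsto_const_nhds (squeeze_zero_norm (fun N => ?_)
    (tendsto_const_mul_two_rpow_pow hμ (⌈T⌉₊ * (M * |K|))))
  rw [hsum N, dyadicSum_eq_sum]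
  refine norm_sum_le_of_norm_le_half_pow_rpow fun i _ => ?_
  have hτs : 0 ≤ dyadicClamp s t N i := hs.trans le_dyadicClamp
  have hτ_mono : dyadicClamp s t N i ≤ dyadicClamp s t N (i + 1) := monotone_dyadicClamp i.le_succ
  have hτt : dyadicClamp s t N (i + 1) ≤ t := dyadicClamp_le hst
  rw [mul_assoc]
  refine (U t _).le_of_opNorm_le_of_le (hU.norm_le _ t (hτs.trans hτ_mono) hτt ht)
    ((hK _ _ hτs hτ_mono (hτt.trans ht)).trans ?_)
  gcongr
  exacts [le_abs_self K, dyadicClamp_succ_sub_le]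

theorem exists_twistedCoboundary_eq [CompleteSpace E] (hU : IsEvolutionFamily U T M)
    {h : ℝ → ℝ → ℝ → E} (hμ : 1 < μ) (hC : 0 ≤ C)
    (hcont : ContinuousOn (fun q : ℝ × ℝ × ℝ => h q.1 q.2.1 q.2.2) (simplex₃ T))
    (hclosed : ∀ s u v t, 0 ≤ s → s ≤ u → u ≤ v → v ≤ t → t ≤ T →
      U t v (h v u s) - h t u s + h t v s - h t v u = 0)
    (hbound : ∀ s u t, 0 ≤ s → s ≤ u → u ≤ t → t ≤ T → ‖h t u s‖ ≤ C * (t - s) ^ μ) :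
    ∃ L : ℝ → ℝ → E,
      ContinuousOn (fun q : ℝ × ℝ => L q.1 q.2) (simplex₂ T) ∧
      (∀ s u t, 0 ≤ s → s ≤ u → u ≤ t → t ≤ T → twistedCoboundary U L t u s = h t u s) ∧
      (∀ s t, 0 ≤ s → s ≤ t → t ≤ T → ‖L t s‖ ≤ M * sewingConst μ * C * (t - s) ^ μ) ∧
      ∀ L' : ℝ → ℝ → E,
        (∃ K, ∀ s t, 0 ≤ s → s ≤ t → t ≤ T → ‖L' t s‖ ≤ K * (t - s) ^ μ) →
        (∀ s u t, 0 ≤ s → s ≤ u → u ≤ t → t ≤ T → twistedCoboundary U L' t u s = h t u s) →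
        ∀ s t, 0 ≤ s → s ≤ t → t ≤ T → L' t s = L t s := by
  let B : ℝ → ℝ → E := fun t s => -h t s 0
  have hBh (s u t) (hs : 0 ≤ s) (hsu : s ≤ u) (hut : u ≤ t) (ht : t ≤ T) :
      twistedCoboundary U B t u s = h t u s := by
    rw [← sub_eq_zero, ← hclosed 0 s u t le_rfl hs hsu hut ht]
    simp only [B, twistedCoboundary, map_neg]
    abel
  have hBc : ContinuousOn (fun q : ℝ × ℝ => B q.1 q.2) (simplex₂ T) :=
    (hcont.comp (f := fun q : ℝ × ℝ => (q.1, q.2, 0)) (by fun_prop)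
      fun q hq => ⟨le_rfl, hq⟩).neg
  obtain ⟨I, hIc, hI, hBI⟩ := hU.exists_twistedCoboundary_eq_zero
    (fun s u t hs hsu hut ht => hBh s u t hs hsu hut ht ▸ hbound s u t hs hsu hut ht) hBc hμ hC
  have hL (s u t) (hs : 0 ≤ s) (hsu : s ≤ u) (hut : u ≤ t) (ht : t ≤ T) :
      twistedCoboundary U (B - I) t u s = h t u s := by
    rw [twistedCoboundary_sub, hBh s u t hs hsu hut ht, hI s u t hs hsu hut ht, sub_zero]
  refine ⟨B - I, hBc.sub hIc, hL, hBI, fun L' ⟨K, hK⟩ hL' s t hs hst ht => ?_⟩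
  refine sub_eq_zero.1 (hU.eq_zero_of_twistedCoboundary_eq_zero (D := L' - (B - I)) hμ
    (fun s u t hs hsu hut ht => ?_)
    (fun s t hs hst ht => (norm_sub_le_of_le (hK s t hs hst ht) (hBI s t hs hst ht)).trans_eq
      (add_mul _ _ _).symm) hs hst ht)
  rw [twistedCoboundary_sub, hL' s u t hs hsu hut ht, hL s u t hs hsu hut ht, sub_self]

end IsEvolutionFamily

theorem twisted_sewing_map_general [CompleteSpace E] (hU : IsEvolutionFamily U T M) (hT : 0 < T)
    (hμ : 1 < μ) {κ : ℝ} (hκ : 0 ≤ κ) (hκμ : κ ≤ μ) {h : ℝ → ℝ → ℝ → E}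
    (hcont : ContinuousOn (fun q : ℝ × ℝ × ℝ => h q.1 q.2.1 q.2.2) (simplex₃ T))
    (hclosed : ∀ s u v t, 0 ≤ s → s ≤ u → u ≤ v → v ≤ t → t ≤ T →
      U t v (h v u s) - h t u s + h t v s - h t v u = 0)
    (hh : ∀ s u t, 0 ≤ s → s ≤ u → u ≤ t → t ≤ T →
      ‖h t u s‖ ≤ C * (t - u) ^ κ * (u - s) ^ (μ - κ)) :
    ∃ L : ℝ → ℝ → E,
      ContinuousOn (fun q : ℝ × ℝ => L q.1 q.2) (simplex₂ T) ∧
      (∀ s u t, 0 ≤ s → s ≤ u → u ≤ t → t ≤ T → twistedCoboundary U L t u s = h t u s) ∧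
      (∀ s t, 0 ≤ s → s ≤ t → t ≤ T → ‖L t s‖ ≤ M * sewingConst μ * C * (t - s) ^ μ) ∧
      ∀ L' : ℝ → ℝ → E,
        (∃ K, ∀ s t, 0 ≤ s → s ≤ t → t ≤ T → ‖L' t s‖ ≤ K * (t - s) ^ μ) →
        (∀ s u t, 0 ≤ s → s ≤ u → u ≤ t → t ≤ T → twistedCoboundary U L' t u s = h t u s) →
        ∀ s t, 0 ≤ s → s ≤ t → t ≤ T → L' t s = L t s := by
  have hC : 0 ≤ C := nonneg_of_norm_le_rpow_mul_rpow hT hh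
  refine hU.exists_twistedCoboundary_eq hμ hC hcont hclosed fun s u t hs hsu hut ht =>
    (hh s u t hs hsu hut ht).trans ?_
  have hpow := rpow_mul_rpow_sub_le (sub_nonneg.2 hut) (sub_nonneg.2 hsu) hκ hκμ
  rw [sub_add_sub_cancel] at hpow
  rw [mul_assoc]
  gcongr

end Sewing

section SetIntegral

variable {α F : Type*} [MeasurableSpace α] [NormedAddCommGroup F] [NormedSpace ℝ F] {p : ℝ≥0∞}
  [Fact (1 ≤ p)] {m : Measure α} {A : Set α}

open ENNReal in
/-- Multiplication by the indicator of a set of finite measure, as a map `L^p → L^1`. -/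
noncomputable def indicatorLp (F : Type*) [NormedAddCommGroup F] [NormedSpace ℝ F] (p : ℝ≥0∞)
    [Fact (1 ≤ p)] (hA : MeasurableSet A) (hmA : m A ≠ ∞) : Lp F p m →L[ℝ] Lp F 1 m :=
  have : Fact (1 ≤ conjExponent p) := ⟨HolderConjugate.one_le _ p⟩
  (ContinuousLinearMap.lsmul ℝ ℝ).holderL m (conjExponent p) p 1
    (indicatorConstLp (conjExponent p) hA hmA 1)

theorem indicatorLp_ae_eq (hA : MeasurableSet A) (hmA : m A ≠ ∞) (φ : Lp F p m) :
    indicatorLp F p hA hmA φ =ᵐ[m] A.indicator φ := by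
  filter_upwards [ContinuousLinearMap.coeFn_holder (r := 1) (ContinuousLinearMap.lsmul ℝ ℝ)
    (indicatorConstLp p.conjExponent hA hmA 1) φ, indicatorConstLp_coeFn (p := p.conjExponent)
    (hs := hA) (hμs := hmA) (c := (1 : ℝ))] with x hx hx'
  refine hx.trans ?_
  by_cases hxA : x ∈ A <;> simp [hx', hxA]

theorem integrableOn_Lp (hA : MeasurableSet A) (hmA : m A ≠ ∞) (φ : Lp F p m) :
    IntegrableOn φ A m :=
  (integrable_indicator_iff hA).1
    ((L1.integrable_coeFn _).congr (indicatorLp_ae_eq hA hmA φ))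

theorem integral_indicatorLp (hA : MeasurableSet A) (hmA : m A ≠ ∞) (φ : Lp F p m) :
    ∫ x, indicatorLp F p hA hmA φ x ∂m = ∫ x in A, φ x ∂m := by
  rw [integral_congr_ae (indicatorLp_ae_eq hA hmA φ), integral_indicator hA]

theorem setIntegral_norm_le (hA : MeasurableSet A) (hmA : m A ≠ ∞) (φ : Lp F p m) :
    ∫ x in A, ‖φ x‖ ∂m ≤ ‖indicatorLp F p hA hmA‖ * ‖φ‖ := by
  refine le_of_eq_of_le ?_ ((indicatorLp F p hA hmA).le_opNorm φ)
  rw [L1.norm_eq_integral_norm, ← integral_indicator hA]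
  refine integral_congr_ae ((indicatorLp_ae_eq hA hmA φ).mono fun x hx => ?_)
  simp only [hx, norm_indicator_eq_indicator_norm]

end SetIntegral

section Convolution

variable {G F : Type*} [AddCommGroup G] [MeasurableSpace G] [NormedAddCommGroup F] [NormedSpace ℝ F]
  {p : ℝ≥0∞} [Fact (1 ≤ p)] {m : Measure G} [m.IsAddRightInvariant]

section MeasurableGroup

variable [MeasurableAdd G]

/-- The translation `φ ↦ φ (· - η)` of `L^p` functions. -/
noncomputable def translateLp (η : G) : Lp F p m →ₗᵢ[ℝ] Lp F p m :=
  Lp.compMeasurePreservingₗᵢ ℝ (· - η) (measurePreserving_sub_right m η)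

theorem translateLp_ae_eq (η : G) (φ : Lp F p m) :
    translateLp η φ =ᵐ[m] fun ξ => φ (ξ - η) :=
  Lp.coeFn_compMeasurePreserving φ (measurePreserving_sub_right m η)

theorem translateLp_zero (φ : Lp F p m) : translateLp 0 φ = φ :=
  Lp.ext ((translateLp_ae_eq 0 φ).trans (by simp))

theorem translateLp_translateLp (η ζ : G) (φ : Lp F p m) :
    translateLp η (translateLp ζ φ) = translateLp (η + ζ) φ := by
  refine Lp.ext ((translateLp_ae_eq η _).trans (.trans ?_ (translateLp_ae_eq _ φ).symm))
  filter_upwards [(measurePreserving_sub_right m η).quasiMeasurePreserving.ae_eq_comp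
    (translateLp_ae_eq ζ φ)] with ξ hξ
  rw [← sub_sub]
  exact hξ

/-- The convolution of an `L^p` function with a measure, as a Bochner integral of translates. -/
noncomputable def convLp (ν : Measure G) (φ : Lp F p m) : Lp F p m :=
  ∫ η, translateLp η φ ∂ν

theorem convLp_dirac_zero [CompleteSpace F] [MeasurableSingletonClass G] (φ : Lp F p m) :
    convLp (.dirac 0) φ = φ := by
  rw [convLp, integral_dirac, translateLp_zero]

theorem norm_convLp_le (ν : Measure G) [IsProbabilityMeasure ν] (φ : Lp F p m) :
    ‖convLp ν φ‖ ≤ ‖φ‖ :=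
  (norm_integral_le_integral_norm _).trans_eq (by simp)

theorem integrable_prod_sub [MeasurableSub₂ G] [SFinite m] (ν : Measure G) [IsFiniteMeasure ν]
    {A : Set G} (hA : MeasurableSet A) (hmA : m A ≠ ∞) (φ : Lp F p m) :
    Integrable (fun x : G × G => φ (x.1 - x.2)) ((m.restrict A).prod ν) := by
  have hmeas : StronglyMeasurable fun x : G × G => φ (x.1 - x.2) :=
    (Lp.stronglyMeasurable φ).comp_measurable measurable_sub
  have hτ (η : G) := ae_restrict_of_ae (s := A) (translateLp_ae_eq η φ)
  rw [integrable_prod_iff' hmeas.aestronglyMeasurable]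
  refine ⟨.of_forall fun η => (integrableOn_Lp hA hmA (translateLp η φ)).congr (hτ η), ?_⟩
  refine .of_bound hmeas.norm.integral_prod_left'.aestronglyMeasurable
    (‖indicatorLp F p hA hmA‖ * ‖φ‖) (.of_forall fun η => ?_)
  rw [Real.norm_of_nonneg (integral_nonneg fun _ => norm_nonneg _), ← (translateLp η).norm_map φ]
  exact (integral_congr_ae ((hτ η).mono fun ξ hξ => congrArg norm hξ.symm)).trans_le
    (setIntegral_norm_le hA hmA _)

end MeasurableGroup

variable [TopologicalSpace G] [IsTopologicalAddGroup G] [BorelSpace G]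
  [IsLocallyFiniteMeasure m] [m.InnerRegularCompactLTTop]

theorem continuous_translateLp (hp : p ≠ ∞) (φ : Lp F p m) :
    Continuous fun η : G => translateLp η φ :=
  let sub : C(G, C(G, G)) := (ContinuousMap.mk (fun a : G × G => a.2 - a.1) (by fun_prop)).curry
  continuous_const.compMeasurePreservingLp sub.continuous (measurePreserving_sub_right m) hp

variable [SecondCountableTopology G]

theorem integrable_translateLp (hp : p ≠ ∞) (ν : Measure G) [IsFiniteMeasure ν] (φ : Lp F p m) :
    Integrable (fun η => translateLp η φ) ν :=
  .of_bound (continuous_translateLp hp φ).aestronglyMeasurable ‖φ‖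
    (.of_forall fun η => ((translateLp η).norm_map φ).le)

theorem convLp_convLp [CompleteSpace F] (hp : p ≠ ∞) (ν₁ ν₂ : Measure G) [IsFiniteMeasure ν₁]
    [IsFiniteMeasure ν₂] (φ : Lp F p m) :
    convLp ν₁ (convLp ν₂ φ) = convLp (ν₁ ∗ ν₂) φ := by
  rw [convLp, convLp, convLp, integral_conv (integrable_translateLp hp _ φ)]
  refine integral_congr_ae (.of_forall fun η => ?_)
  simpa [translateLp_translateLp] using
    ((translateLp η).toContinuousLinearMap.integral_comp_comm (integrable_translateLp hp ν₂ φ)).symm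

theorem continuous_convLp_map {X : Type*} [TopologicalSpace X] [FirstCountableTopology X]
    (hp : p ≠ ∞) (ν : Measure G) [IsFiniteMeasure ν] {f : X → G → G} (hf : ∀ x, Measurable (f x))
    (hfc : ∀ η, Continuous (f · η)) (φ : Lp F p m) :
    Continuous fun x => convLp (ν.map (f x)) φ := by
  have hτ := continuous_translateLp (p := p) hp φ
  have hmap (x : X) : convLp (ν.map (f x)) φ = ∫ η, translateLp (f x η) φ ∂ν :=
    integral_map (hf x).aemeasurable hτ.aestronglyMeasurable
  simp only [hmap]
  exact continuous_of_dominated (fun x => hτ.aestronglyMeasurable.comp_measurable (hf x))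
    (fun x => .of_forall fun η => ((translateLp _).norm_map φ).le) (integrable_const ‖φ‖)
    (.of_forall fun η => hτ.comp (hfc η))

theorem convLp_ae_eq [SigmaFinite m] [CompleteSpace F] (hp : p ≠ ∞) (ν : Measure G)
    [IsFiniteMeasure ν] (φ : Lp F p m) : convLp ν φ =ᵐ[m] fun ξ => ∫ η, φ (ξ - η) ∂ν := by
  refine ae_eq_of_forall_setIntegral_eq_of_sigmaFinite
    (fun A hA hmA => integrableOn_Lp hA hmA.ne _)
    (fun A hA hmA => (integrable_prod_sub ν hA hmA.ne φ).integral_prod_left) fun A hA hmA => ?_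
  let ℓ : Lp F p m →L[ℝ] F := L1.integralCLM ∘L indicatorLp F p hA hmA.ne
  have hℓ (ψ : Lp F p m) : ℓ ψ = ∫ ξ in A, ψ ξ ∂m := by
    rw [← integral_indicatorLp hA hmA.ne, ← L1.integral_eq_integral, L1.integral_eq]
    rfl
  calc ∫ ξ in A, convLp ν φ ξ ∂m = ∫ η, ℓ (translateLp η φ) ∂ν := by
        rw [ℓ.integral_comp_comm (integrable_translateLp hp ν φ), ← hℓ, convLp]
    _ = ∫ η, ∫ ξ in A, φ (ξ - η) ∂m ∂ν := by
        simp only [hℓ]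
        exact integral_congr_ae (.of_forall fun η =>
          integral_congr_ae (ae_restrict_of_ae (translateLp_ae_eq η φ)))
    _ = ∫ ξ in A, ∫ η, φ (ξ - η) ∂ν ∂m :=
        (integral_integral_swap (f := fun ξ η => φ (ξ - η))
          (integrable_prod_sub ν hA hmA.ne φ)).symm

end Convolution

section HeatMeasure

open ProbabilityTheory

variable {V : Type*} [NormedAddCommGroup V] [InnerProductSpace ℝ V] [FiniteDimensional ℝ V]
  [MeasurableSpace V] [BorelSpace V] {s t : ℝ}

/-- The centred Gaussian measure on `V` with covariance `t • id`, that is, the law at time `t` of a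
standard Brownian motion; for `t = 0` it is the Dirac measure at `0`. -/
noncomputable def heatMeasure (V : Type*) [NormedAddCommGroup V] [InnerProductSpace ℝ V]
    [FiniteDimensional ℝ V] [MeasurableSpace V] (t : ℝ) : Measure V :=
  (stdGaussian V).map (√t • ·)

instance isProbabilityMeasure_heatMeasure : IsProbabilityMeasure (heatMeasure V t) :=
  Measure.isProbabilityMeasure_map (by fun_prop)

theorem heatMeasure_zero : heatMeasure V 0 = .dirac 0 := by
  simp [heatMeasure]

theorem charFun_heatMeasure (ht : 0 ≤ t) (ξ : V) :
    charFun (heatMeasure V t) ξ = Complex.exp (-(t * ‖ξ‖ ^ 2 / 2)) := by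
  rw [heatMeasure, charFun_map_smul, charFun_stdGaussian, norm_smul, Real.norm_of_nonneg
    (Real.sqrt_nonneg t), Complex.ofReal_mul, mul_pow, ← Complex.ofReal_pow (√t), Real.sq_sqrt ht,
    neg_div]

theorem heatMeasure_conv_heatMeasure (hs : 0 ≤ s) (ht : 0 ≤ t) :
    heatMeasure V s ∗ heatMeasure V t = heatMeasure V (s + t) := by
  refine Measure.ext_of_charFun (funext fun ξ => ?_)
  rw [charFun_conv, charFun_heatMeasure hs, charFun_heatMeasure ht,
    charFun_heatMeasure (add_nonneg hs ht), ← Complex.exp_add]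
  congr 1
  push_cast
  ring

theorem heatKernel_nonneg (n : ℕ) (ht : 0 ≤ t) (ξ : EuclideanSpace ℝ (Fin n)) :
    0 ≤ heatKernel n t ξ := by
  unfold heatKernel
  positivity

theorem measurable_heatKernel (n : ℕ) (t : ℝ) : Measurable (heatKernel n t) := by
  unfold heatKernel
  fun_prop

theorem integral_withDensity_heatKernel {E : Type*} [NormedAddCommGroup E] [NormedSpace ℝ E]
    {n : ℕ} (ht : 0 ≤ t) (f : EuclideanSpace ℝ (Fin n) → E) :
    ∫ ξ, f ξ ∂volume.withDensity (fun ξ => ENNReal.ofReal (heatKernel n t ξ)) =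
      ∫ ξ, heatKernel n t ξ • f ξ := by
  rw [integral_withDensity_eq_integral_toReal_smul (measurable_heatKernel n t).ennreal_ofReal
    (by simp)]
  simp only [ENNReal.toReal_ofReal (heatKernel_nonneg n ht _)]

theorem integrable_heatKernel (n : ℕ) (ht : 0 < t) : Integrable (heatKernel n t) := by
  have h := GaussianFourier.integral_rexp_neg_mul_sq_norm (V := EuclideanSpace ℝ (Fin n))
    (b := 1 / (2 * t)) (by positivity)
  refine ((Integrable.of_integral_ne_zero (h.trans_ne (by positivity))).const_mul
    ((2 * π * t) ^ (-(n : ℝ) / 2))).congr (.of_forall fun ξ => ?_)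
  simp only [heatKernel]
  congr 2
  ring

theorem charFun_withDensity_heatKernel (n : ℕ) (ht : 0 < t) (ξ : EuclideanSpace ℝ (Fin n)) :
    charFun (volume.withDensity fun ξ => ENNReal.ofReal (heatKernel n t ξ)) ξ =
      Complex.exp (-(t * ‖ξ‖ ^ 2 / 2)) := by
  have hc : (0 : ℝ) < 2 * π * t := by positivity
  have htC : (t : ℂ) ≠ 0 := Complex.ofReal_ne_zero.2 ht.ne'
  have hnormalize : ((2 * π * t : ℝ) : ℂ) ^ (-(n : ℂ) / 2) *
      (π / (1 / (2 * t) : ℝ)) ^ ((n : ℂ) / 2) = 1 := by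
    rw [show (π / (1 / (2 * t) : ℝ) : ℂ) = (2 * π * t : ℝ) by push_cast; field_simp,
      ← Complex.cpow_add _ _ (Complex.ofReal_ne_zero.2 hc.ne'), neg_div, neg_add_cancel,
      Complex.cpow_zero]
  have hfourier := GaussianFourier.integral_cexp_neg_mul_sq_norm_add (b := (1 / (2 * t) : ℝ))
    (Complex.ofReal_re _ ▸ by positivity) Complex.I ξ
  rw [finrank_euclideanSpace_fin] at hfourier
  rw [charFun_apply, integral_withDensity_heatKernel ht.le]
  calc ∫ x, heatKernel n t x • Complex.exp (inner ℝ x ξ * Complex.I)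
      = ∫ x, ((2 * π * t : ℝ) : ℂ) ^ (-(n : ℂ) / 2) *
          Complex.exp (-(1 / (2 * t) : ℝ) * ‖x‖ ^ 2 + Complex.I * inner ℝ ξ x) := by
        congr 1 with x
        rw [heatKernel, Complex.real_smul, Complex.exp_add, Complex.ofReal_mul,
          Complex.ofReal_cpow hc.le, Complex.ofReal_exp, real_inner_comm, mul_comm Complex.I,
          mul_assoc]
        push_cast
        ring_nf
    _ = Complex.exp (-(t * ‖ξ‖ ^ 2 / 2)) := by
        rw [integral_const_mul, hfourier, ← mul_assoc, hnormalize, one_mul, Complex.I_sq]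
        congr 1
        push_cast
        field_simp
        ring

theorem withDensity_heatKernel (n : ℕ) (ht : 0 < t) :
    volume.withDensity (fun ξ => ENNReal.ofReal (heatKernel n t ξ)) =
      heatMeasure (EuclideanSpace ℝ (Fin n)) t := by
  have := isFiniteMeasure_withDensity_ofReal (integrable_heatKernel n ht).2
  refine Measure.ext_of_charFun (funext fun ξ => ?_)
  rw [charFun_withDensity_heatKernel n ht, charFun_heatMeasure ht.le]

theorem convol_heatKernel {n : ℕ} (ht : 0 < t) (f : EuclideanSpace ℝ (Fin n) → ℝ) :
    convol (heatKernel n t) f = fun ξ => ∫ η, f (ξ - η) ∂heatMeasure _ t := by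
  funext ξ
  rw [← withDensity_heatKernel n ht, integral_withDensity_heatKernel ht.le]
  rfl

end HeatMeasure

section HeatSemigroup

variable {V : Type*} [NormedAddCommGroup V] [InnerProductSpace ℝ V] [FiniteDimensional ℝ V]
  [MeasurableSpace V] [BorelSpace V] {F : Type*} [NormedAddCommGroup F] [NormedSpace ℝ F]
  [CompleteSpace F] {p : ℝ≥0∞} [Fact (1 ≤ p)] {m : Measure V} [m.IsAddRightInvariant]
  [IsLocallyFiniteMeasure m] [m.InnerRegularCompactLTTop] {S : ℝ → Lp F p m →L[ℝ] Lp F p m}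

theorem isEvolutionFamily_of_eq_convLp_heatMeasure (hp : p ≠ ∞)
    (hS : ∀ t, 0 ≤ t → ∀ φ, S t φ = convLp (heatMeasure V t) φ) (T : ℝ) :
    IsEvolutionFamily (fun t s => S (t - s)) T 1 where
  apply_self t _ _ φ := by
    rw [sub_self, hS 0 le_rfl, heatMeasure_zero, convLp_dirac_zero]
  apply_apply s u t _ hsu hut _ φ := by
    rw [hS _ (sub_nonneg.2 hut), hS _ (sub_nonneg.2 hsu), hS _ (by linarith), convLp_convLp hp,
      heatMeasure_conv_heatMeasure (sub_nonneg.2 hut) (sub_nonneg.2 hsu), sub_add_sub_cancel]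
  norm_le s t _ hst _ := (S (t - s)).opNorm_le_bound zero_le_one fun φ => by
    rw [hS _ (sub_nonneg.2 hst), one_mul]
    exact norm_convLp_le _ φ
  continuousOn_apply φ := by
    have hconv : Continuous fun q : ℝ × ℝ => convLp (heatMeasure V (q.1 - q.2)) φ :=
      continuous_convLp_map hp (ProbabilityTheory.stdGaussian V)
        (f := fun (q : ℝ × ℝ) η => √(q.1 - q.2) • η) (fun q => by fun_prop) (fun η => by fun_prop) φ
    exact hconv.continuousOn.congr fun q hq => hS _ (sub_nonneg.2 hq.2.1) φ

theorem eq_convLp_heatMeasure_of_ae_eq_convol {n : ℕ} {p : ℝ} [Fact (1 ≤ ENNReal.ofReal p)]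
    {S : ℝ → LpR n p →L[ℝ] LpR n p} (hS0 : S 0 = ContinuousLinearMap.id ℝ (LpR n p))
    (hSheat : ∀ t, 0 < t → ∀ φ : LpR n p, S t φ =ᵐ[volume] convol (heatKernel n t) φ)
    {t : ℝ} (ht : 0 ≤ t) (φ : LpR n p) : S t φ = convLp (heatMeasure _ t) φ := by
  obtain rfl | ht := ht.eq_or_lt
  · rw [hS0, heatMeasure_zero, convLp_dirac_zero]
    rfl
  · refine Lp.ext ((hSheat t ht φ).trans ?_)
    rw [convol_heatKernel ht]
    exact (convLp_ae_eq ENNReal.ofReal_ne_top _ φ).symm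

end HeatSemigroup

/-- the sewing map `Λ̂` associated with the heat semigroup on
`L^p(ℝ^n)`.  Given `μ > 1`, `κ ∈ [0,μ]`, and a continuous `h : S_T³ → L^p(ℝ^n)`
which is `δ̂`-closed and satisfies `‖h_{tus}‖ ≤ C (t-u)^κ (u-s)^{μ-κ}`, there is a
unique continuous `Λh : S_T² → L^p(ℝ^n)` with
`sup ‖(Λh)_{ts}‖/(t-s)^μ < ∞` and `δ̂(Λh) = h`; moreover
`‖(Λh)_{ts}‖ ≤ c C (t-s)^μ` with `c` depending only on `μ` and `T`. -/
theorem twisted_sewing_map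
    (n : ℕ) (hn : 1 ≤ n) (p : ℝ) (hp : 1 ≤ p) [Fact (1 ≤ ENNReal.ofReal p)]
    (S : ℝ → LpR n p →L[ℝ] LpR n p)
    (hS0 : S 0 = ContinuousLinearMap.id ℝ (LpR n p))
    (hSheat : ∀ t : ℝ, 0 < t → ∀ φ : LpR n p,
      ⇑(S t φ) =ᵐ[volume] convol (heatKernel n t) ⇑φ)
    (T : ℝ) (hT : 0 < T) (μ : ℝ) (hμ : 1 < μ) :
    ∃ c : ℝ, 0 < c ∧
      ∀ κ : ℝ, 0 ≤ κ → κ ≤ μ →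
      ∀ h : ℝ → ℝ → ℝ → LpR n p,
        ContinuousOn (fun q : ℝ × ℝ × ℝ => h q.1 q.2.1 q.2.2)
          {q : ℝ × ℝ × ℝ | 0 ≤ q.2.2 ∧ q.2.2 ≤ q.2.1 ∧ q.2.1 ≤ q.1 ∧ q.1 ≤ T} →
        (∀ s u v t : ℝ, 0 ≤ s → s ≤ u → u ≤ v → v ≤ t → t ≤ T →
          S (t - v) (h v u s) - h t u s + h t v s - h t v u = 0) →
      ∀ C : ℝ,
        (∀ s u t : ℝ, 0 ≤ s → s ≤ u → u ≤ t → t ≤ T →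
          ‖h t u s‖ ≤ C * (t - u) ^ κ * (u - s) ^ (μ - κ)) →
      ∃ L : ℝ → ℝ → LpR n p,
        ContinuousOn (fun q : ℝ × ℝ => L q.1 q.2)
          {q : ℝ × ℝ | 0 ≤ q.2 ∧ q.2 ≤ q.1 ∧ q.1 ≤ T} ∧
        (∀ s u t : ℝ, 0 ≤ s → s ≤ u → u ≤ t → t ≤ T →
          L t s - L t u - S (t - u) (L u s) = h t u s) ∧
        (∀ s t : ℝ, 0 ≤ s → s ≤ t → t ≤ T → ‖L t s‖ ≤ c * C * (t - s) ^ μ) ∧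
        (∀ L' : ℝ → ℝ → LpR n p,
          ContinuousOn (fun q : ℝ × ℝ => L' q.1 q.2)
            {q : ℝ × ℝ | 0 ≤ q.2 ∧ q.2 ≤ q.1 ∧ q.1 ≤ T} →
          (∃ K : ℝ, ∀ s t : ℝ, 0 ≤ s → s ≤ t → t ≤ T → ‖L' t s‖ ≤ K * (t - s) ^ μ) →
          (∀ s u t : ℝ, 0 ≤ s → s ≤ u → u ≤ t → t ≤ T →
            L' t s - L' t u - S (t - u) (L' u s) = h t u s) →
          ∀ s t : ℝ, 0 ≤ s → s ≤ t → t ≤ T → L' t s = L t s) := by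
  have hheat : IsEvolutionFamily (fun t s => S (t - s)) T 1 :=
    isEvolutionFamily_of_eq_convLp_heatMeasure ENNReal.ofReal_ne_top
      (fun t ht => eq_convLp_heatMeasure_of_ae_eq_convol hS0 hSheat ht) T
  refine ⟨sewingConst μ, sewingConst_pos hμ, fun κ hκ hκμ h hcont hclosed C hh => ?_⟩
  obtain ⟨L, hLcont, hL, hLbound, hLunique⟩ :=
    twisted_sewing_map_general hheat hT hμ hκ hκμ hcont hclosed hh
  rw [one_mul] at hLbound
  exact ⟨L, hLcont, hL, hLbound, fun L' _ => hLunique L'⟩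
end

section
/- Integration by parts for the first-order heat-convolution increment: let x : [0,T] → ℝ be continuously differentiable and let φ be a Schwartz function on ℝ^n. Then for all 0 ≤ s ≤ t ≤ T the following equalities hold in L^p(ℝ^n): ∫_s^t x'(u) (g_{t−u} * φ) du = (x_t − x_s) φ + ∫_s^t (x_u − x_s) (∂g_{t−u} * φ) du = (x_t − x_s) (g_{t−s} * φ) − ∫_s^t (x_t − x_u) (∂g_{t−u} * φ) du, where all integrals are absolutely convergent Bochner integrals in L^p(ℝ^n) (at u = t the first integrand is interpreted as x'(t)φ). -/
open MeasureTheory Real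
open scoped ENNReal

/-- Time derivative of the heat kernel:
`∂g_t(ξ) = (2πt)^(-n/2) e^{-|ξ|²/(2t)} (|ξ|²/(2t²) - n/(2t))`. -/
noncomputable def heatKernelDt (n : ℕ) (t : ℝ) : EuclideanSpace ℝ (Fin n) → ℝ :=
  fun ξ => (2 * π * t) ^ (-(n : ℝ) / 2) * Real.exp (-‖ξ‖ ^ 2 / (2 * t)) *
    (‖ξ‖ ^ 2 / (2 * t ^ 2) - (n : ℝ) / (2 * t))

/-- Heat semigroup at the level of functions: `S_t φ = g_t * φ` for `t > 0`,
`S_0 = Id` (also for `t ≤ 0`). -/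
noncomputable def heatS (n : ℕ) (t : ℝ) (φ : EuclideanSpace ℝ (Fin n) → ℝ) :
    EuclideanSpace ℝ (Fin n) → ℝ :=
  if 0 < t then convol (heatKernel n t) φ else φ

/-!
The function `r ↦ (g_r * φ)(ξ)` is differentiable for `r > 0` with derivative `(∂g_r * φ)(ξ)`, and
tends to `φ ξ` as `r → 0⁺`, so both identities are the classical integration by parts for
`(x_u - c) (g_{t-u} * φ)(ξ)`, with `c = x_s` and `c = x_t` respectively. The point is integrability
at `u = t`, where `∂g_r` has `L¹` norm of order `r⁻¹`. Since `∫ ∂g_r = 0`, one may replace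
`φ (ξ - η)` by `φ (ξ - η) - φ ξ` in the convolution; the additional factor `|η|` gains `√r` on the
scale `|η| ~ √r` of the kernel, and `r^(-1/2)` is integrable. All bounds carry a weight
`(1 + |ξ|)^(-k)`, which lies in `L^p` for `k` large.
-/

open Set Filter Topology
open scoped SchwartzMap

section Decay

variable {E F : Type*} [NormedAddCommGroup E] [NormedAddCommGroup F] [NormedSpace ℝ F]

lemma one_add_norm_pow_le_mul_one_add_norm_sub_pow (k : ℕ) (ξ z : E) :
    (1 + ‖ξ‖) ^ k ≤ (1 + ‖z‖) ^ k * (1 + ‖z - ξ‖) ^ k := by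
  rw [← mul_pow]
  gcongr
  nlinarith [norm_le_norm_add_norm_sub z ξ, norm_nonneg z, norm_nonneg (z - ξ)]

variable [NormedSpace ℝ E]

lemma exists_norm_schwartz_le_of_mem_closedBall (φ : 𝓢(E, F)) (k : ℕ) :
    ∃ C, 0 ≤ C ∧ ∀ ξ η : E, ∀ z ∈ Metric.closedBall ξ ‖η‖,
      ‖φ z‖ ≤ C * (1 + ‖η‖) ^ k * ((1 + ‖ξ‖) ^ k)⁻¹ := by
  obtain ⟨C, hC⟩ : ∃ C, ∀ z, (1 + ‖z‖) ^ k * ‖φ z‖ ≤ C := ⟨_, fun z => by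
    simpa using SchwartzMap.one_add_le_sup_seminorm_apply (𝕜 := ℝ) (m := (k, 0)) le_rfl le_rfl φ z⟩
  refine ⟨C, (by positivity : (0 : ℝ) ≤ _).trans (hC 0), fun ξ η z hz => ?_⟩
  have hzη : ‖z - ξ‖ ≤ ‖η‖ := by rwa [← dist_eq_norm]
  rw [← div_eq_mul_inv, le_div_iff₀ (by positivity)]
  calc ‖φ z‖ * (1 + ‖ξ‖) ^ k
      ≤ ‖φ z‖ * ((1 + ‖z‖) ^ k * (1 + ‖z - ξ‖) ^ k) := by
        gcongr
        exact one_add_norm_pow_le_mul_one_add_norm_sub_pow k ξ z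
    _ = (1 + ‖z‖) ^ k * ‖φ z‖ * (1 + ‖z - ξ‖) ^ k := by ring
    _ ≤ C * (1 + ‖η‖) ^ k :=
        mul_le_mul (hC z) (by gcongr) (by positivity) ((by positivity : (0 : ℝ) ≤ _).trans (hC z))

lemma exists_norm_schwartz_comp_sub_le (φ : 𝓢(E, F)) (k : ℕ) :
    ∃ C, 0 ≤ C ∧ ∀ ξ η, ‖φ (ξ - η)‖ ≤ C * (1 + ‖η‖) ^ k * ((1 + ‖ξ‖) ^ k)⁻¹ := by
  obtain ⟨C, hC₀, hC⟩ := exists_norm_schwartz_le_of_mem_closedBall φ k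
  exact ⟨C, hC₀, fun ξ η => hC ξ η _ (by simp)⟩

lemma exists_norm_schwartz_le (φ : 𝓢(E, F)) : ∃ M, ∀ z, ‖φ z‖ ≤ M := by
  obtain ⟨M, -, hM⟩ := exists_norm_schwartz_comp_sub_le φ 0
  exact ⟨M, fun z => by simpa using hM z 0⟩

lemma exists_norm_schwartz_comp_sub_sub_le (φ : 𝓢(E, F)) (k : ℕ) :
    ∃ C, 0 ≤ C ∧ ∀ ξ η, ‖φ (ξ - η) - φ ξ‖ ≤
      C * (‖η‖ * (1 + ‖η‖) ^ k) * ((1 + ‖ξ‖) ^ k)⁻¹ := by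
  obtain ⟨C, hC₀, hC⟩ :=
    exists_norm_schwartz_le_of_mem_closedBall (SchwartzMap.fderivCLM ℝ E F φ) k
  refine ⟨C, hC₀, fun ξ η => ?_⟩
  calc ‖φ (ξ - η) - φ ξ‖
      ≤ C * (1 + ‖η‖) ^ k * ((1 + ‖ξ‖) ^ k)⁻¹ * ‖ξ - η - ξ‖ :=
        (convex_closedBall ξ ‖η‖).norm_image_sub_le_of_norm_fderiv_le (𝕜 := ℝ)
          (fun _ _ => φ.differentiableAt) (hC ξ η) (by simp) (by simp)
    _ = C * (‖η‖ * (1 + ‖η‖) ^ k) * ((1 + ‖ξ‖) ^ k)⁻¹ := by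
        rw [sub_sub_cancel_left, norm_neg]
        ring

end Decay

lemma lintegral_eLpNorm_lt_top_of_norm_le {α β E : Type*} [MeasurableSpace α] [MeasurableSpace β]
    [NormedAddCommGroup E] {μ : Measure α} {ν : Measure β} {p : ℝ≥0∞} {w : α → ℝ}
    (hw : eLpNorm w p μ < ⊤) {b : β → ℝ} (hb : Integrable b ν) {f : β → α → E}
    (hf : ∀ᵐ u ∂ν, ∀ᵐ ξ ∂μ, ‖f u ξ‖ ≤ b u * ‖w ξ‖) :
    ∫⁻ u, eLpNorm (f u) p μ ∂ν < ⊤ :=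
  calc ∫⁻ u, eLpNorm (f u) p μ ∂ν
      ≤ ∫⁻ u, ENNReal.ofReal (b u) * eLpNorm w p μ ∂ν :=
        lintegral_mono_ae (hf.mono fun _ hu => eLpNorm_le_mul_eLpNorm_of_ae_le_mul hu p)
    _ = (∫⁻ u, ENNReal.ofReal (b u) ∂ν) * eLpNorm w p μ := lintegral_mul_const' _ _ hw.ne
    _ < ⊤ := ENNReal.mul_lt_top hb.lintegral_lt_top hw

lemma lintegral_eLpNorm_mul_lt_top_of_decay {E : Type*} [NormedAddCommGroup E] [MeasurableSpace E]
    {μ : Measure E} [hμ : μ.HasTemperateGrowth] (p : ℝ≥0∞) {s t : ℝ} {a b : ℝ → ℝ}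
    {f : ℝ → E → ℝ} (hab : IntegrableOn (fun u => a u * b u) (Ioc s t))
    (hf : ∀ k : ℕ, ∃ C, ∀ u ∈ Ioo s t, ∀ ξ, |f u ξ| ≤ C * b u * ((1 + ‖ξ‖) ^ k)⁻¹) :
    ∫⁻ u in Ioc s t, eLpNorm (fun ξ => a u * f u ξ) p μ < ⊤ := by
  obtain ⟨k, hk⟩ := hμ.exists_eLpNorm_lt_top p
  obtain ⟨C, hC⟩ := hf k
  rw [← restrict_Ioo_eq_restrict_Ioc]
  refine lintegral_eLpNorm_lt_top_of_norm_le hk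
    ((hab.mono_set Ioo_subset_Ioc_self).norm.const_mul |C|) ?_
  refine (ae_restrict_mem measurableSet_Ioo).mono fun u hu => .of_forall fun ξ => ?_
  rw [norm_mul, rpow_neg (by positivity), rpow_natCast, norm_inv]
  calc |a u| * |f u ξ| ≤ |a u| * |C * b u * ((1 + ‖ξ‖) ^ k)⁻¹| :=
        mul_le_mul_of_nonneg_left ((hC u hu ξ).trans (le_abs_self _)) (abs_nonneg _)
    _ = |C| * |a u * b u| * |(1 + ‖ξ‖) ^ k|⁻¹ := by
        simp only [abs_mul, abs_inv]
        ring

section HeatKernel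

variable (n : ℕ)

lemma heatKernel_nonneg_s8 {r : ℝ} (hr : 0 ≤ r) (η : EuclideanSpace ℝ (Fin n)) :
    0 ≤ heatKernel n r η := by
  unfold heatKernel
  positivity

lemma continuous_heatKernel (r : ℝ) : Continuous (heatKernel n r) := by
  unfold heatKernel
  fun_prop

lemma continuous_heatKernelDt (r : ℝ) : Continuous (heatKernelDt n r) := by
  unfold heatKernelDt
  fun_prop

lemma integral_heatKernel {r : ℝ} (hr : 0 < r) : ∫ η, heatKernel n r η = 1 := by
  have hexp (η : EuclideanSpace ℝ (Fin n)) :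
      rexp (-‖η‖ ^ 2 / (2 * r)) = rexp (-(1 / (2 * r)) * ‖η‖ ^ 2) := by
    congr 1
    ring
  have hscale : π / (1 / (2 * r)) = 2 * π * r := by field_simp
  simp only [heatKernel, integral_const_mul, hexp]
  rw [GaussianFourier.integral_rexp_neg_mul_sq_norm (by positivity), finrank_euclideanSpace,
    Fintype.card_fin, hscale, ← rpow_add (by positivity), neg_div, neg_add_cancel, rpow_zero]

lemma integrable_heatKernel_s8 {r : ℝ} (hr : 0 < r) : Integrable (heatKernel n r) :=
  integrable_of_integral_eq_one (integral_heatKernel n hr)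

lemma hasDerivAt_heatKernel {r : ℝ} (hr : 0 < r) (η : EuclideanSpace ℝ (Fin n)) :
    HasDerivAt (fun r => heatKernel n r η) (heatKernelDt n r η) r := by
  have hne : 2 * π * r ≠ 0 := by positivity
  have hpow : HasDerivAt (fun r : ℝ => (2 * π * r) ^ (-(n : ℝ) / 2))
      (2 * π * 1 * (-(n : ℝ) / 2) * (2 * π * r) ^ (-(n : ℝ) / 2 - 1)) r :=
    ((hasDerivAt_id r).const_mul (2 * π)).rpow_const (Or.inl hne)
  have hexp : HasDerivAt (fun r : ℝ => rexp (-‖η‖ ^ 2 / (2 * r)))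
      (rexp (-‖η‖ ^ 2 / (2 * r)) * ((0 * (2 * r) - -‖η‖ ^ 2 * (2 * 1)) / (2 * r) ^ 2)) r :=
    ((hasDerivAt_const r (-‖η‖ ^ 2)).div ((hasDerivAt_id r).const_mul 2) (by simp [hr.ne'])).exp
  refine (hpow.mul hexp).congr_deriv ?_
  rw [heatKernelDt, rpow_sub_one hne]
  field_simp
  ring

lemma heatKernel_eq_mul_heatKernel {r ρ : ℝ} (hr : 0 < r) (hρ : 0 < ρ)
    (η : EuclideanSpace ℝ (Fin n)) :
    heatKernel n r η = (ρ / r) ^ ((n : ℝ) / 2) * rexp (‖η‖ ^ 2 / (2 * ρ) - ‖η‖ ^ 2 / (2 * r)) *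
      heatKernel n ρ η := by
  have hpow : (2 * π * r) ^ (-(n : ℝ) / 2)
      = (ρ / r) ^ ((n : ℝ) / 2) * (2 * π * ρ) ^ (-(n : ℝ) / 2) := by
    rw [show 2 * π * r = (ρ / r)⁻¹ * (2 * π * ρ) by field_simp,
      mul_rpow (by positivity) (by positivity), inv_rpow (by positivity), neg_div,
      rpow_neg (by positivity), inv_inv]
  have hexp : rexp (-‖η‖ ^ 2 / (2 * r))
      = rexp (‖η‖ ^ 2 / (2 * ρ) - ‖η‖ ^ 2 / (2 * r)) * rexp (-‖η‖ ^ 2 / (2 * ρ)) := by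
    rw [← Real.exp_add]
    congr 1
    ring
  rw [heatKernel, heatKernel, hpow, hexp]
  ring

lemma heatKernel_le_mul_heatKernel {r ρ : ℝ} (hr : 0 < r) (hrρ : r ≤ ρ)
    (η : EuclideanSpace ℝ (Fin n)) :
    heatKernel n r η ≤ (ρ / r) ^ ((n : ℝ) / 2) * heatKernel n ρ η := by
  have hρ : 0 < ρ := hr.trans_le hrρ
  have hexp : rexp (‖η‖ ^ 2 / (2 * ρ) - ‖η‖ ^ 2 / (2 * r)) ≤ 1 :=
    Real.exp_le_one_iff.2 (sub_nonpos.2 (by gcongr))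
  rw [heatKernel_eq_mul_heatKernel n hr hρ]
  exact mul_le_mul_of_nonneg_right (mul_le_of_le_one_right (by positivity) hexp)
    (heatKernel_nonneg_s8 n hρ.le η)

lemma one_add_pow_mul_exp_neg_sq_div_four_le (m : ℕ) {y : ℝ} (hy : 0 ≤ y) :
    (1 + y) ^ m * rexp (-y ^ 2 / 4) ≤ m.factorial * rexp 2 := by
  have hpow : (1 + y) ^ m ≤ m.factorial * rexp (1 + y) :=
    (div_le_iff₀' (by positivity)).1 (Real.pow_div_factorial_le_exp (1 + y) (by positivity) m)
  calc (1 + y) ^ m * rexp (-y ^ 2 / 4)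
      ≤ m.factorial * rexp (1 + y) * rexp (-y ^ 2 / 4) := by gcongr
    _ = m.factorial * rexp (1 + y + -y ^ 2 / 4) := by rw [mul_assoc, ← Real.exp_add]
    _ ≤ m.factorial * rexp 2 := by
      gcongr
      nlinarith [sq_nonneg (y - 2)]

lemma exists_heatKernel_mul_one_add_pow_le (m : ℕ) :
    ∃ C, 0 ≤ C ∧ ∀ r, 0 < r → ∀ η : EuclideanSpace ℝ (Fin n),
      heatKernel n r η * (1 + ‖η‖ / √r) ^ m ≤ C * heatKernel n (2 * r) η := by
  refine ⟨2 ^ ((n : ℝ) / 2) * (m.factorial * rexp 2), by positivity, fun r hr η => ?_⟩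
  have hdouble : heatKernel n r η
      = 2 ^ ((n : ℝ) / 2) * rexp (-(‖η‖ / √r) ^ 2 / 4) * heatKernel n (2 * r) η := by
    rw [heatKernel_eq_mul_heatKernel n hr (by positivity : 0 < 2 * r),
      mul_div_cancel_right₀ _ hr.ne', div_pow, sq_sqrt hr.le]
    congr 3
    field_simp
    ring
  calc heatKernel n r η * (1 + ‖η‖ / √r) ^ m
      = 2 ^ ((n : ℝ) / 2) * ((1 + ‖η‖ / √r) ^ m * rexp (-(‖η‖ / √r) ^ 2 / 4)) *
          heatKernel n (2 * r) η := by
        rw [hdouble]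
        ring
    _ ≤ 2 ^ ((n : ℝ) / 2) * (m.factorial * rexp 2) * heatKernel n (2 * r) η := by
        have hg := heatKernel_nonneg_s8 n (by positivity : 0 ≤ 2 * r) η
        have hy := one_add_pow_mul_exp_neg_sq_div_four_le m (by positivity : 0 ≤ ‖η‖ / √r)
        gcongr

lemma abs_heatKernelDt_le {r : ℝ} (hr : 0 < r) (η : EuclideanSpace ℝ (Fin n)) :
    |heatKernelDt n r η| ≤ (n + 1) / r * (heatKernel n r η * (1 + ‖η‖ / √r) ^ 2) := by
  have hg := heatKernel_nonneg_s8 n hr.le η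
  have hsq : (‖η‖ / √r) ^ 2 = ‖η‖ ^ 2 / r := by rw [div_pow, sq_sqrt hr.le]
  have hfactor : |‖η‖ ^ 2 / (2 * r ^ 2) - n / (2 * r)| ≤ (n + 1) / r * (1 + ‖η‖ / √r) ^ 2 :=
    calc |‖η‖ ^ 2 / (2 * r ^ 2) - n / (2 * r)|
        ≤ ‖η‖ ^ 2 / (2 * r ^ 2) + n / (2 * r) := by
          refine (abs_sub _ _).trans_eq ?_
          rw [abs_of_nonneg (by positivity), abs_of_nonneg (by positivity)]
      _ = ((‖η‖ / √r) ^ 2 + n) / 2 / r := by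
          rw [hsq]
          field_simp
      _ ≤ (n + 1) * (1 + ‖η‖ / √r) ^ 2 / r := by
          gcongr
          have hy : 0 ≤ ‖η‖ / √r := by positivity
          nlinarith [mul_nonneg n.cast_nonneg hy, mul_nonneg n.cast_nonneg (sq_nonneg (‖η‖ / √r))]
      _ = (n + 1) / r * (1 + ‖η‖ / √r) ^ 2 := by ring
  calc |heatKernelDt n r η|
      = |heatKernel n r η * (‖η‖ ^ 2 / (2 * r ^ 2) - n / (2 * r))| := rfl
    _ = heatKernel n r η * |‖η‖ ^ 2 / (2 * r ^ 2) - n / (2 * r)| := by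
        rw [abs_mul, abs_of_nonneg hg]
    _ ≤ heatKernel n r η * ((n + 1) / r * (1 + ‖η‖ / √r) ^ 2) := by gcongr
    _ = (n + 1) / r * (heatKernel n r η * (1 + ‖η‖ / √r) ^ 2) := by ring

lemma exists_abs_heatKernelDt_le :
    ∃ C, 0 ≤ C ∧ ∀ r, 0 < r → ∀ η : EuclideanSpace ℝ (Fin n),
      |heatKernelDt n r η| ≤ C / r * heatKernel n (2 * r) η := by
  obtain ⟨C, hC₀, hC⟩ := exists_heatKernel_mul_one_add_pow_le n 2
  refine ⟨(n + 1) * C, by positivity, fun r hr η => ?_⟩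
  calc |heatKernelDt n r η| ≤ (n + 1) / r * (heatKernel n r η * (1 + ‖η‖ / √r) ^ 2) :=
        abs_heatKernelDt_le n hr η
    _ ≤ (n + 1) / r * (C * heatKernel n (2 * r) η) :=
        mul_le_mul_of_nonneg_left (hC r hr η) (by positivity)
    _ = (n + 1) * C / r * heatKernel n (2 * r) η := by ring

lemma integrable_heatKernelDt {r : ℝ} (hr : 0 < r) : Integrable (heatKernelDt n r) := by
  obtain ⟨C, -, hC⟩ := exists_abs_heatKernelDt_le n
  exact ((integrable_heatKernel_s8 n (by positivity : 0 < 2 * r)).const_mul (C / r)).mono'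
    (continuous_heatKernelDt n r).aestronglyMeasurable (.of_forall (hC r hr))

lemma exists_abs_heatKernelDt_le_of_mem_Ioo {r₀ : ℝ} (hr₀ : 0 < r₀) :
    ∃ C, 0 ≤ C ∧ ∀ r ∈ Ioo (r₀ / 2) (2 * r₀), ∀ η : EuclideanSpace ℝ (Fin n),
      |heatKernelDt n r η| ≤ C * heatKernel n (4 * r₀) η := by
  obtain ⟨C, hC₀, hC⟩ := exists_abs_heatKernelDt_le n
  refine ⟨C / (r₀ / 2) * 4 ^ ((n : ℝ) / 2), by positivity, fun r ⟨hlow, hup⟩ η => ?_⟩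
  have hr : 0 < r := (half_pos hr₀).trans hlow
  have hratio : 4 * r₀ / (2 * r) ≤ 4 := by
    rw [div_le_iff₀ (by positivity)]
    linarith
  have hg := heatKernel_nonneg_s8 n (by positivity : 0 ≤ 4 * r₀) η
  have hg' := heatKernel_nonneg_s8 n (by positivity : 0 ≤ 2 * r) η
  calc |heatKernelDt n r η| ≤ C / r * heatKernel n (2 * r) η := hC r hr η
    _ ≤ C / (r₀ / 2) * ((4 * r₀ / (2 * r)) ^ ((n : ℝ) / 2) * heatKernel n (4 * r₀) η) := by
        gcongr
        exact heatKernel_le_mul_heatKernel n (by positivity) (by linarith) η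
    _ ≤ C / (r₀ / 2) * (4 ^ ((n : ℝ) / 2) * heatKernel n (4 * r₀) η) := by gcongr
    _ = C / (r₀ / 2) * 4 ^ ((n : ℝ) / 2) * heatKernel n (4 * r₀) η := by ring

lemma hasDerivAt_integral_heatKernel_mul {r : ℝ} (hr : 0 < r)
    {f : EuclideanSpace ℝ (Fin n) → ℝ} (hf : AEStronglyMeasurable f) {M : ℝ}
    (hM : ∀ η, |f η| ≤ M) :
    HasDerivAt (fun r => ∫ η, heatKernel n r η * f η) (∫ η, heatKernelDt n r η * f η) r := by
  obtain ⟨C, hC₀, hC⟩ := exists_abs_heatKernelDt_le_of_mem_Ioo n hr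
  have hr4 : 0 < 4 * r := by positivity
  refine (hasDerivAt_integral_of_dominated_loc_of_deriv_le
    (F := fun ρ η => heatKernel n ρ η * f η) (F' := fun ρ η => heatKernelDt n ρ η * f η)
    (bound := fun η => C * heatKernel n (4 * r) η * M) (s := Ioo (r / 2) (2 * r))
    (Ioo_mem_nhds (by linarith) (by linarith)) ?_ ?_ ?_ ?_ ?_ ?_).2
  · exact .of_forall fun ρ => (continuous_heatKernel n ρ).aestronglyMeasurable.mul hf
  · exact (integrable_heatKernel_s8 n hr).mul_bdd hf (.of_forall hM)
  · exact (continuous_heatKernelDt n r).aestronglyMeasurable.mul hf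
  · refine .of_forall fun η ρ hρ => ?_
    rw [norm_mul]
    exact mul_le_mul (hC ρ hρ η) (hM η) (norm_nonneg _)
      (mul_nonneg hC₀ (heatKernel_nonneg_s8 n hr4.le η))
  · exact ((integrable_heatKernel_s8 n hr4).const_mul C).mul_const M
  · exact .of_forall fun η ρ hρ =>
      (hasDerivAt_heatKernel n ((half_pos hr).trans hρ.1) η).mul_const (f η)

lemma integral_heatKernelDt {r : ℝ} (hr : 0 < r) : ∫ η, heatKernelDt n r η = 0 := by
  have hderiv : HasDerivAt (fun ρ => ∫ η, heatKernel n ρ η) (∫ η, heatKernelDt n r η) r := by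
    simpa using hasDerivAt_integral_heatKernel_mul n hr (f := fun _ => 1)
      aestronglyMeasurable_const (M := 1) (by simp)
  refine hderiv.unique ((hasDerivAt_const r (1 : ℝ)).congr_of_eventuallyEq ?_)
  filter_upwards [Ioi_mem_nhds hr] with ρ hρ using integral_heatKernel n hρ

lemma exists_heatKernel_moment_le (i j k : ℕ) (T : ℝ) :
    ∃ C, 0 ≤ C ∧ ∀ r, 0 < r → r ≤ T → ∀ η : EuclideanSpace ℝ (Fin n),
      heatKernel n r η * (1 + ‖η‖ / √r) ^ i * (‖η‖ ^ j * (1 + ‖η‖) ^ k)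
        ≤ C * √r ^ j * heatKernel n (2 * r) η := by
  obtain ⟨C, hC₀, hC⟩ := exists_heatKernel_mul_one_add_pow_le n (i + j + k)
  refine ⟨(1 + √T) ^ k * C, by positivity, fun r hr hrT η => ?_⟩
  have hη : ‖η‖ = √r * (‖η‖ / √r) := by field_simp
  have hg := heatKernel_nonneg_s8 n hr.le η
  have hmain := hC r hr η
  set y := ‖η‖ / √r
  have hy : 0 ≤ y := by positivity
  have hj : ‖η‖ ^ j ≤ √r ^ j * (1 + y) ^ j := by
    rw [hη, mul_pow]
    gcongr
    linarith
  have hk : (1 + ‖η‖) ^ k ≤ (1 + √T) ^ k * (1 + y) ^ k := by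
    rw [← mul_pow, hη]
    gcongr
    nlinarith [mul_le_mul_of_nonneg_right (sqrt_le_sqrt hrT) hy, sqrt_nonneg T]
  calc heatKernel n r η * (1 + y) ^ i * (‖η‖ ^ j * (1 + ‖η‖) ^ k)
      ≤ heatKernel n r η * (1 + y) ^ i *
          ((√r ^ j * (1 + y) ^ j) * ((1 + √T) ^ k * (1 + y) ^ k)) := by gcongr
    _ = √r ^ j * (1 + √T) ^ k * (heatKernel n r η * (1 + y) ^ (i + j + k)) := by ring
    _ ≤ √r ^ j * (1 + √T) ^ k * (C * heatKernel n (2 * r) η) := by gcongr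
    _ = (1 + √T) ^ k * C * √r ^ j * heatKernel n (2 * r) η := by ring

lemma exists_abs_integral_mul_le (i j k : ℕ) (T : ℝ) :
    ∃ C, 0 ≤ C ∧ ∀ r, 0 < r → r ≤ T → ∀ (h f : EuclideanSpace ℝ (Fin n) → ℝ) (a b : ℝ),
      0 ≤ a → 0 ≤ b → (∀ η, |h η| ≤ a * (heatKernel n r η * (1 + ‖η‖ / √r) ^ i)) →
      (∀ η, |f η| ≤ b * (‖η‖ ^ j * (1 + ‖η‖) ^ k)) →
      |∫ η, h η * f η| ≤ C * (a * √r ^ j * b) := by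
  obtain ⟨C, hC₀, hC⟩ := exists_heatKernel_moment_le n i j k T
  refine ⟨C, hC₀, fun r hr hrT h f a b ha hb hh hf => ?_⟩
  have hr2 : 0 < 2 * r := by positivity
  have hpointwise (η) : |h η * f η| ≤ C * (a * √r ^ j * b) * heatKernel n (2 * r) η :=
    calc |h η * f η|
        ≤ a * (heatKernel n r η * (1 + ‖η‖ / √r) ^ i) * (b * (‖η‖ ^ j * (1 + ‖η‖) ^ k)) := by
          rw [abs_mul]
          exact mul_le_mul (hh η) (hf η) (abs_nonneg _) ((abs_nonneg _).trans (hh η))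
      _ = a * b * (heatKernel n r η * (1 + ‖η‖ / √r) ^ i * (‖η‖ ^ j * (1 + ‖η‖) ^ k)) := by ring
      _ ≤ a * b * (C * √r ^ j * heatKernel n (2 * r) η) :=
          mul_le_mul_of_nonneg_left (hC r hr hrT η) (by positivity)
      _ = C * (a * √r ^ j * b) * heatKernel n (2 * r) η := by ring
  calc |∫ η, h η * f η|
      ≤ ∫ η, C * (a * √r ^ j * b) * heatKernel n (2 * r) η :=
        norm_integral_le_of_norm_le (f := fun η => h η * f η)
          ((integrable_heatKernel_s8 n hr2).const_mul _) (.of_forall hpointwise)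
    _ = C * (a * √r ^ j * b) := by
        rw [integral_const_mul, integral_heatKernel n hr2, mul_one]

end HeatKernel

section HeatSemigroup

variable {n : ℕ} (φ : 𝓢(EuclideanSpace ℝ (Fin n), ℝ))

lemma exists_abs_convol_heatKernel_le (k : ℕ) (T : ℝ) :
    ∃ C, ∀ r, 0 < r → r ≤ T → ∀ ξ,
      |convol (heatKernel n r) φ ξ| ≤ C * ((1 + ‖ξ‖) ^ k)⁻¹ := by
  obtain ⟨A, hA₀, hA⟩ := exists_norm_schwartz_comp_sub_le φ k
  obtain ⟨B, -, hB⟩ := exists_abs_integral_mul_le n 0 0 k T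
  refine ⟨B * A, fun r hr hrT ξ => ?_⟩
  calc |convol (heatKernel n r) φ ξ|
      ≤ B * (1 * √r ^ 0 * (A * ((1 + ‖ξ‖) ^ k)⁻¹)) :=
        hB r hr hrT _ _ _ _ zero_le_one (by positivity)
          (fun η => by simp [abs_of_nonneg (heatKernel_nonneg_s8 n hr.le η)])
          (fun η => (hA ξ η).trans_eq (by ring))
    _ = B * A * ((1 + ‖ξ‖) ^ k)⁻¹ := by ring

lemma integrable_mul_schwartz_comp_sub {h : EuclideanSpace ℝ (Fin n) → ℝ} (hh : Integrable h)
    (ξ : EuclideanSpace ℝ (Fin n)) : Integrable fun η => h η * φ (ξ - η) := by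
  obtain ⟨M, hM⟩ := exists_norm_schwartz_le φ
  exact hh.mul_bdd (φ.continuous.comp (continuous_sub_left ξ)).aestronglyMeasurable
    (.of_forall fun η => hM (ξ - η))

lemma integral_mul_schwartz_comp_sub_sub {h : EuclideanSpace ℝ (Fin n) → ℝ} (hh : Integrable h)
    (ξ : EuclideanSpace ℝ (Fin n)) :
    ∫ η, h η * (φ (ξ - η) - φ ξ) = convol h φ ξ - (∫ η, h η) * φ ξ := by
  simp only [mul_sub]
  rw [integral_sub (integrable_mul_schwartz_comp_sub φ hh ξ) (hh.mul_const _), integral_mul_const,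
    convol]

lemma exists_abs_convol_heatKernel_sub_le (T : ℝ) :
    ∃ C, ∀ r, 0 < r → r ≤ T → ∀ ξ, |convol (heatKernel n r) φ ξ - φ ξ| ≤ C * √r := by
  obtain ⟨A, hA₀, hA⟩ := exists_norm_schwartz_comp_sub_sub_le φ 0
  obtain ⟨B, -, hB⟩ := exists_abs_integral_mul_le n 0 1 0 T
  refine ⟨B * A, fun r hr hrT ξ => ?_⟩
  calc |convol (heatKernel n r) φ ξ - φ ξ|
      = |∫ η, heatKernel n r η * (φ (ξ - η) - φ ξ)| := by
        rw [integral_mul_schwartz_comp_sub_sub φ (integrable_heatKernel_s8 n hr),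
          integral_heatKernel n hr, one_mul]
    _ ≤ B * (1 * √r ^ 1 * A) :=
        hB r hr hrT _ _ _ _ zero_le_one hA₀
          (fun η => by simp [abs_of_nonneg (heatKernel_nonneg_s8 n hr.le η)])
          (fun η => by simpa using hA ξ η)
    _ = B * A * √r := by ring

lemma exists_abs_convol_heatKernelDt_le (k : ℕ) (T : ℝ) :
    ∃ C, ∀ r, 0 < r → r ≤ T → ∀ ξ,
      |convol (heatKernelDt n r) φ ξ| ≤ C * r ^ (-(1 / 2) : ℝ) * ((1 + ‖ξ‖) ^ k)⁻¹ := by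
  obtain ⟨A, hA₀, hA⟩ := exists_norm_schwartz_comp_sub_sub_le φ k
  obtain ⟨B, -, hB⟩ := exists_abs_integral_mul_le n 2 1 k T
  refine ⟨B * A * (n + 1), fun r hr hrT ξ => ?_⟩
  have hrpow : √r / r = r ^ (-(1 / 2) : ℝ) := by
    rw [rpow_neg hr.le, ← sqrt_eq_rpow, sqrt_div_self]
  calc |convol (heatKernelDt n r) φ ξ|
      = |∫ η, heatKernelDt n r η * (φ (ξ - η) - φ ξ)| := by
        rw [integral_mul_schwartz_comp_sub_sub φ (integrable_heatKernelDt n hr),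
          integral_heatKernelDt n hr, zero_mul, sub_zero]
    _ ≤ B * ((n + 1) / r * √r ^ 1 * (A * ((1 + ‖ξ‖) ^ k)⁻¹)) :=
        hB r hr hrT _ _ _ _ (by positivity) (by positivity) (abs_heatKernelDt_le n hr)
          (fun η => (hA ξ η).trans_eq (by ring))
    _ = B * A * (n + 1) * (√r / r) * ((1 + ‖ξ‖) ^ k)⁻¹ := by ring
    _ = B * A * (n + 1) * r ^ (-(1 / 2) : ℝ) * ((1 + ‖ξ‖) ^ k)⁻¹ := by rw [hrpow]

lemma heatS_of_pos {r : ℝ} (hr : 0 < r) : heatS n r φ = convol (heatKernel n r) φ := if_pos hr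

lemma heatS_of_nonpos {r : ℝ} (hr : r ≤ 0) : heatS n r φ = φ := if_neg hr.not_gt

lemma hasDerivAt_heatS {r : ℝ} (hr : 0 < r) (ξ : EuclideanSpace ℝ (Fin n)) :
    HasDerivAt (fun r => heatS n r φ ξ) (convol (heatKernelDt n r) φ ξ) r := by
  obtain ⟨M, hM⟩ := exists_norm_schwartz_le φ
  have hderiv := hasDerivAt_integral_heatKernel_mul n hr
    (φ.continuous.comp (continuous_sub_left ξ)).aestronglyMeasurable fun η => hM (ξ - η)
  refine hderiv.congr_of_eventuallyEq ?_
  filter_upwards [Ioi_mem_nhds hr] with ρ hρ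
  rw [heatS_of_pos φ hρ]
  rfl

lemma continuous_heatS (ξ : EuclideanSpace ℝ (Fin n)) : Continuous fun r => heatS n r φ ξ := by
  refine continuous_iff_continuousAt.2 fun r => ?_
  rcases lt_or_ge 0 r with hr | hr
  · exact (hasDerivAt_heatS φ hr ξ).continuousAt
  · obtain ⟨C, hC⟩ := exists_abs_convol_heatKernel_sub_le φ 1
    have hbound : ∀ᶠ ρ in 𝓝 r, dist (heatS n ρ φ ξ) (φ ξ) ≤ C * √ρ := by
      filter_upwards [Iio_mem_nhds (hr.trans_lt one_pos)] with ρ hρ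
      rcases lt_or_ge 0 ρ with hρ₀ | hρ₀
      · simpa [heatS_of_pos φ hρ₀, Real.dist_eq] using hC ρ hρ₀ (mem_Iio.1 hρ).le ξ
      · simp [heatS_of_nonpos φ hρ₀, sqrt_eq_zero_of_nonpos hρ₀]
    have hlim : Tendsto (fun ρ => C * √ρ) (𝓝 r) (𝓝 0) := by
      simpa [sqrt_eq_zero_of_nonpos hr] using (continuous_sqrt.const_mul C).tendsto r
    rw [ContinuousAt, heatS_of_nonpos φ hr, tendsto_iff_dist_tendsto_zero]
    exact squeeze_zero' (.of_forall fun _ => dist_nonneg) hbound hlim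

lemma integrableOn_convol_heatKernelDt {τ : ℝ} (ξ : EuclideanSpace ℝ (Fin n)) :
    IntegrableOn (fun r => convol (heatKernelDt n r) φ ξ) (Ioc 0 τ) := by
  rcases le_total τ 0 with hτ | hτ
  · simp [Ioc_eq_empty_of_le hτ]
  obtain ⟨C, hC⟩ := exists_abs_convol_heatKernelDt_le φ 0 τ
  have hdom : IntegrableOn (fun r : ℝ => C * r ^ (-(1 / 2) : ℝ)) (Ioc 0 τ) :=
    ((intervalIntegrable_iff_integrableOn_Ioc_of_le hτ).1
      (intervalIntegral.intervalIntegrable_rpow' (by norm_num))).const_mul C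
  refine hdom.mono' ((measurable_deriv fun r => heatS n r φ ξ).aestronglyMeasurable.congr ?_) ?_
  · filter_upwards [ae_restrict_mem measurableSet_Ioc] with r hr
      using (hasDerivAt_heatS φ hr.1 ξ).deriv
  · filter_upwards [ae_restrict_mem measurableSet_Ioc] with r hr
    simpa using hC r hr.1 hr.2 ξ

end HeatSemigroup

section IntegrationByParts

variable {n : ℕ} (φ : 𝓢(EuclideanSpace ℝ (Fin n), ℝ)) {s t : ℝ}

lemma lintegral_eLpNorm_mul_convol_heatKernel_lt_top (p : ℝ≥0∞) {a : ℝ → ℝ}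
    (ha : IntegrableOn a (Ioc s t)) :
    ∫⁻ u in Ioc s t, eLpNorm (fun ξ => a u * convol (heatKernel n (t - u)) φ ξ) p < ⊤ := by
  refine lintegral_eLpNorm_mul_lt_top_of_decay (b := fun _ => 1) p (by simpa using ha) fun k => ?_
  obtain ⟨C, hC⟩ := exists_abs_convol_heatKernel_le φ k (t - s)
  refine ⟨C, fun u hu ξ => ?_⟩
  simpa using hC (t - u) (sub_pos.2 hu.2) (sub_le_sub_left hu.1.le t) ξ

lemma lintegral_eLpNorm_mul_convol_heatKernelDt_lt_top (p : ℝ≥0∞) (hst : s ≤ t) {a : ℝ → ℝ}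
    (ha : ContinuousOn a (Icc s t)) :
    ∫⁻ u in Ioc s t, eLpNorm (fun ξ => a u * convol (heatKernelDt n (t - u)) φ ξ) p < ⊤ := by
  have hrpow : IntervalIntegrable (fun u => (t - u) ^ (-(1 / 2) : ℝ)) volume s t := by
    simpa using (intervalIntegral.intervalIntegrable_rpow' (a := t - s) (b := 0)
      (r := (-(1 / 2) : ℝ)) (by norm_num)).comp_sub_left t
  have hint := (intervalIntegrable_iff_integrableOn_Ioc_of_le hst).1
    (hrpow.continuousOn_mul (by rwa [uIcc_of_le hst]))
  refine lintegral_eLpNorm_mul_lt_top_of_decay p hint fun k => ?_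
  obtain ⟨C, hC⟩ := exists_abs_convol_heatKernelDt_le φ k (t - s)
  exact ⟨C, fun u hu => hC (t - u) (sub_pos.2 hu.2) (sub_le_sub_left hu.1.le t)⟩

lemma integral_deriv_mul_convol_heatKernel {x x' : ℝ → ℝ} (hst : s ≤ t)
    (hx : ContinuousOn x (Icc s t)) (hx' : ∀ u ∈ Ioo s t, HasDerivAt x (x' u) u)
    (hint : IntervalIntegrable x' volume s t) (c : ℝ) (ξ : EuclideanSpace ℝ (Fin n)) :
    ∫ u in s..t, x' u * convol (heatKernel n (t - u)) φ ξ
      = (x t - c) * φ ξ - (x s - c) * heatS n (t - s) φ ξ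
        + ∫ u in s..t, (x u - c) * convol (heatKernelDt n (t - u)) φ ξ := by
  have hDt : IntervalIntegrable (fun u => -convol (heatKernelDt n (t - u)) φ ξ) volume s t := by
    simpa [Pi.neg_def] using (((intervalIntegrable_iff_integrableOn_Ioc_of_le (sub_nonneg.2 hst)).2
      (integrableOn_convol_heatKernelDt φ ξ)).comp_sub_left t).symm.neg
  have hderiv (u) (hu : u < t) :
      HasDerivAt (fun u => heatS n (t - u) φ ξ) (-convol (heatKernelDt n (t - u)) φ ξ) u :=
    HasDerivAt.comp_const_sub t u (hasDerivAt_heatS φ (sub_pos.2 hu) ξ)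
  have hparts := intervalIntegral.integral_mul_deriv_eq_deriv_mul_of_hasDerivAt
    (u := fun u => x u - c) (v := fun u => heatS n (t - u) φ ξ)
    (by rw [uIcc_of_le hst]; exact hx.sub continuousOn_const)
    ((continuous_heatS φ ξ).comp (continuous_sub_left t)).continuousOn
    (fun u hu => (hx' u (by simpa [hst] using hu)).sub_const c)
    (fun u hu => hderiv u (by simpa [hst] using hu.2)) hint hDt
  have hcongr : ∫ u in s..t, x' u * heatS n (t - u) φ ξ
      = ∫ u in s..t, x' u * convol (heatKernel n (t - u)) φ ξ :=
    intervalIntegral.integral_congr_Ioo_of_le hst fun u hu => by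
      simp only [heatS_of_pos φ (sub_pos.2 hu.2)]
  rw [hcongr, sub_self, heatS_of_nonpos φ le_rfl] at hparts
  simp only [mul_neg, intervalIntegral.integral_neg] at hparts
  linarith

theorem integration_by_parts_first_order_general (p : ℝ≥0∞) {x x' : ℝ → ℝ} (hst : s ≤ t)
    (hx : ContinuousOn x (Icc s t)) (hx' : ∀ u ∈ Ioo s t, HasDerivAt x (x' u) u)
    (hint : IntervalIntegrable x' volume s t) :
    (∫⁻ u in Ioc s t, eLpNorm (fun ξ => x' u * convol (heatKernel n (t - u)) φ ξ) p < ⊤) ∧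
    (∫⁻ u in Ioc s t,
      eLpNorm (fun ξ => (x u - x s) * convol (heatKernelDt n (t - u)) φ ξ) p < ⊤) ∧
    (∫⁻ u in Ioc s t,
      eLpNorm (fun ξ => (x t - x u) * convol (heatKernelDt n (t - u)) φ ξ) p < ⊤) ∧
    (∀ ξ, ∫ u in s..t, x' u * convol (heatKernel n (t - u)) φ ξ
      = (x t - x s) * φ ξ
        + ∫ u in s..t, (x u - x s) * convol (heatKernelDt n (t - u)) φ ξ) ∧
    (∀ ξ, ∫ u in s..t, x' u * convol (heatKernel n (t - u)) φ ξ
      = (x t - x s) * convol (heatKernel n (t - s)) φ ξ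
        - ∫ u in s..t, (x t - x u) * convol (heatKernelDt n (t - u)) φ ξ) := by
  refine ⟨lintegral_eLpNorm_mul_convol_heatKernel_lt_top φ p hint.1,
    lintegral_eLpNorm_mul_convol_heatKernelDt_lt_top φ p hst (hx.sub continuousOn_const),
    lintegral_eLpNorm_mul_convol_heatKernelDt_lt_top φ p hst (continuousOn_const.sub hx),
    fun ξ => ?_, fun ξ => ?_⟩
  · simpa using integral_deriv_mul_convol_heatKernel φ hst hx hx' hint (x s) ξ
  · have hheatS : (x t - x s) * heatS n (t - s) φ ξ
        = (x t - x s) * convol (heatKernel n (t - s)) φ ξ := by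
      rcases hst.eq_or_lt with rfl | hlt
      · simp
      · rw [heatS_of_pos φ (sub_pos.2 hlt)]
    have hneg : ∫ u in s..t, (x u - x t) * convol (heatKernelDt n (t - u)) φ ξ
        = -∫ u in s..t, (x t - x u) * convol (heatKernelDt n (t - u)) φ ξ := by
      simp only [← intervalIntegral.integral_neg, ← neg_mul, neg_sub]
    rw [integral_deriv_mul_convol_heatKernel φ hst hx hx' hint (x t) ξ, hneg, ← hheatS]
    ring

end IntegrationByParts

/-- integration by parts for the first-order heat-convolution
increment.  For `x : [0,T] → ℝ` continuously differentiable and `φ` Schwartz,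
`∫_s^t x'(u) (g_{t-u} * φ) du = (x_t - x_s) φ + ∫_s^t (x_u - x_s)(∂g_{t-u} * φ) du
= (x_t - x_s)(g_{t-s} * φ) - ∫_s^t (x_t - x_u)(∂g_{t-u} * φ) du`,
all integrals being absolutely convergent Bochner integrals in `L^p(ℝ^n)`. -/
theorem integration_by_parts_first_order
    (n : ℕ) (hn : 1 ≤ n) (p : ℝ) (hp : 1 ≤ p) (T : ℝ) (hT : 0 < T)
    (x : ℝ → ℝ) (hx : ContDiff ℝ 1 x)
    (φ : SchwartzMap (EuclideanSpace ℝ (Fin n)) ℝ)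
    (s t : ℝ) (hs : 0 ≤ s) (hst : s ≤ t) (ht : t ≤ T) :
    ((∫⁻ u in Set.Ioc s t,
        eLpNorm (fun ξ => deriv x u * convol (heatKernel n (t - u)) (⇑φ) ξ)
          (ENNReal.ofReal p) volume) < ⊤) ∧
    ((∫⁻ u in Set.Ioc s t,
        eLpNorm (fun ξ => (x u - x s) * convol (heatKernelDt n (t - u)) (⇑φ) ξ)
          (ENNReal.ofReal p) volume) < ⊤) ∧
    ((∫⁻ u in Set.Ioc s t,
        eLpNorm (fun ξ => (x t - x u) * convol (heatKernelDt n (t - u)) (⇑φ) ξ)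
          (ENNReal.ofReal p) volume) < ⊤) ∧
    (∀ ξ, (∫ u in s..t, deriv x u * convol (heatKernel n (t - u)) (⇑φ) ξ)
        = (x t - x s) * φ ξ
          + ∫ u in s..t, (x u - x s) * convol (heatKernelDt n (t - u)) (⇑φ) ξ) ∧
    (∀ ξ, (∫ u in s..t, deriv x u * convol (heatKernel n (t - u)) (⇑φ) ξ)
        = (x t - x s) * convol (heatKernel n (t - s)) (⇑φ) ξ
          - ∫ u in s..t, (x t - x u) * convol (heatKernelDt n (t - u)) (⇑φ) ξ) := by
  exact integration_by_parts_first_order_general φ _ hst hx.continuous.continuousOn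
    (fun _ _ => (hx.differentiable one_ne_zero).differentiableAt.hasDerivAt)
    ((hx.continuous_deriv le_rfl).intervalIntegrable s t)
end
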